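/- arXiv:1906.06860 — 5 statements merged into one kernel-verified Lean document; each statement's English description precedes it below -/
import Mathlib

section
/- Let $p,q,r$ be nonzero complex numbers satisfying the local Calabi–Yau condition $\frac1p+\frac1q+\frac1r=0$, and let $k,l$ be positive integers. Set $\lambda=kp$ and $\mu=lp$ (so that automatically $p+q\neq0$ and $\lambda+\mu\neq0$). Then $\sum_{j=1}^{k} j\,\binom{-\lambda/r}{k-j}\binom{-\mu/r}{l+j} \;=\; \frac{1}{p+q}\,\frac{\lambda\mu}{\lambda+\mu}\,\binom{-\lambda/r}{k}\binom{-\mu/r}{l}$. -/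
/-- The generalized binomial coefficient $\binom{z}{k} = z(z-1)\cdots(z-k+1)/k!$. -/
noncomputable def gchoose (z : ℂ) (k : ℕ) : ℂ :=
  (∏ i ∈ Finset.range k, (z - (i : ℂ))) / (Nat.factorial k : ℂ)

/-!
For arbitrary `a` and `b`, put `F i m = (a - i) m C(a, i) C(b, m)`. The recurrence
`(n + 1) C(a, n + 1) = (a - n) C(a, n)` shows that
`F (i + 1) m - F i (m + 1) = (a m - b (i + 1)) C(a, i + 1) C(b, m)`.
Hence `∑ (a (l + j) - b i) C(a, i) C(b, l + j)` over `i + j = k` telescopes to `F k l`, the term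
with `i = 0` being `F 0 (l + k)` itself. When `a = -λ/r` and `b = -μ/r`, which are proportional
to `k` and `l`, the weight `a (l + j) - b i` collapses to `(a + b) j`.
-/

open Finset

section BinomialRing

variable {R : Type*} [CommRing R] [BinomialRing R]

theorem succ_mul_choose_succ (a : R) (n : ℕ) :
    ((n : R) + 1) * Ring.choose a (n + 1) = (a - n) * Ring.choose a n := by
  have h := Ring.choose_smul_choose a (Nat.le_add_right n 1)
  rwa [Nat.choose_succ_self_right, Nat.add_sub_cancel_left, Ring.choose_one_right,
    nsmul_eq_mul, Nat.cast_succ, mul_comm (Ring.choose a n)] at h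

theorem sum_antidiagonal_sub_mul_choose_mul_choose (a b : R) (k l : ℕ) :
    ∑ ij ∈ antidiagonal k,
        (a * (l + ij.2) - b * ij.1) * (Ring.choose a ij.1 * Ring.choose b (l + ij.2))
      = (a - k) * l * (Ring.choose a k * Ring.choose b l) := by
  induction k generalizing l with
  | zero => simp
  | succ k ih =>
    have tail := ih (l + 1)
    simp only [Nat.cast_succ, add_assoc, add_comm (1 : ℕ), add_comm (1 : R)] at tail
    simp only [Nat.sum_antidiagonal_succ', Nat.cast_succ, Nat.cast_zero, add_zero]
    rw [tail]
    linear_combination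
      (Ring.choose a k * (a - k)) * succ_mul_choose_succ b l
        - ((b - l) * Ring.choose b l) * succ_mul_choose_succ a k

theorem add_mul_sum_mul_choose_mul_choose {a b : R} {k l : ℕ} (hab : a * l = b * k) :
    (a + b) * ∑ j ∈ Icc 1 k, (j : R) * Ring.choose a (k - j) * Ring.choose b (l + j)
      = (a - k) * l * (Ring.choose a k * Ring.choose b l) := by
  have weight {ij : ℕ × ℕ} (hij : ij ∈ antidiagonal k) :
      a * (l + ij.2) - b * ij.1 = (a + b) * ij.2 := by
    rw [← mem_antidiagonal.mp hij, Nat.cast_add] at hab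
    linear_combination hab
  calc (a + b) * ∑ j ∈ Icc 1 k, (j : R) * Ring.choose a (k - j) * Ring.choose b (l + j)
    _ = (a + b) * ∑ j ∈ range (k + 1),
          (j : R) * Ring.choose a (k - j) * Ring.choose b (l + j) := by
      rw [sum_range_eq_add_Ico _ k.succ_pos, Nat.cast_zero, zero_mul, zero_mul, zero_add]
      rfl
    _ = (a + b) * ∑ ij ∈ antidiagonal k,
          (ij.2 : R) * Ring.choose a ij.1 * Ring.choose b (l + ij.2) := by
      rw [← Nat.sum_antidiagonal_swap, Nat.sum_antidiagonal_eq_sum_range_succ_mk]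
      rfl
    _ = ∑ ij ∈ antidiagonal k,
          (a * (l + ij.2) - b * ij.1) * (Ring.choose a ij.1 * Ring.choose b (l + ij.2)) := by
      rw [mul_sum]
      exact sum_congr rfl fun ij hij => by rw [weight hij]; ring
    _ = (a - k) * l * (Ring.choose a k * Ring.choose b l) :=
      sum_antidiagonal_sub_mul_choose_mul_choose a b k l

end BinomialRing

section Field

variable {K : Type*} [Field K]

theorem add_ne_zero_of_one_div_add_eq_zero {p q r : K} (hr : r ≠ 0)
    (hCY : 1 / p + 1 / q + 1 / r = 0) : p + q ≠ 0 := by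
  intro hpq
  rw [eq_neg_of_add_eq_zero_right hpq, one_div_neg_eq_neg_one_div, add_neg_cancel,
    zero_add] at hCY
  exact one_div_ne_zero hr hCY

theorem neg_div_eq_one_add_div_of_one_div_add_eq_zero {p q r : K} (hp : p ≠ 0)
    (hCY : 1 / p + 1 / q + 1 / r = 0) : -p / r = 1 + p / q := by
  linear_combination -p * hCY + mul_one_div_cancel hp

theorem special_binomial_identity_general [CharZero K] {p q r : K}
    (hp : p ≠ 0) (hq : q ≠ 0) (hr : r ≠ 0) (hCY : 1 / p + 1 / q + 1 / r = 0)
    {k l : ℕ} (hkl : k + l ≠ 0) :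
    ∑ j ∈ Icc 1 k,
        (j : K) * Ring.choose (-(k * p) / r) (k - j) * Ring.choose (-(l * p) / r) (l + j)
      = (1 / (p + q)) * ((k * p) * (l * p) / (k * p + l * p)) *
          Ring.choose (-(k * p) / r) k * Ring.choose (-(l * p) / r) l := by
  have hpq : p + q ≠ 0 := add_ne_zero_of_one_div_add_eq_zero hr hCY
  have hkl' : (k : K) + l ≠ 0 := mod_cast hkl
  have upper_eq (n : ℕ) : -(n * p) / r = n * ((p + q) / q) := by
    rw [add_div, div_self hq, add_comm,
      ← neg_div_eq_one_add_div_of_one_div_add_eq_zero hp hCY]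
    ring
  have upper_add_ne_zero : (k : K) * ((p + q) / q) + l * ((p + q) / q) ≠ 0 := by
    rw [← add_mul]
    exact mul_ne_zero hkl' (div_ne_zero hpq hq)
  rw [upper_eq k, upper_eq l]
  apply mul_left_cancel₀ upper_add_ne_zero
  rw [add_mul_sum_mul_choose_mul_choose (by ring), ← add_mul (k : K) l p]
  field_simp
  ring

end Field

theorem gchoose_eq_choose (z : ℂ) (n : ℕ) : gchoose z n = Ring.choose z n := by
  rw [Ring.choose_eq_smul, ← Polynomial.aeval_eq_smeval, Polynomial.aeval_def,
    Polynomial.eval₂_eq_eval_map, descPochhammer_map, descPochhammer_eval_eq_prod_range,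
    smul_eq_mul, gchoose, div_eq_inv_mul]

/-- For nonzero complex $p,q,r$ with $1/p+1/q+1/r=0$ and positive integers $k,l$, setting
$\lambda = kp$, $\mu = lp$, one has
$\sum_{j=1}^{k} j \binom{-\lambda/r}{k-j}\binom{-\mu/r}{l+j}
  = \frac{1}{p+q}\frac{\lambda\mu}{\lambda+\mu}\binom{-\lambda/r}{k}\binom{-\mu/r}{l}$. -/
theorem special_binomial_identity (p q r : ℂ) (hp : p ≠ 0) (hq : q ≠ 0) (hr : r ≠ 0)
    (hCY : 1 / p + 1 / q + 1 / r = 0) (k l : ℕ) (hk : 0 < k) (hl : 0 < l) :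
    ∑ j ∈ Finset.Icc 1 k,
        (j : ℂ) * gchoose (-((k : ℂ) * p) / r) (k - j) * gchoose (-((l : ℂ) * p) / r) (l + j)
      = (1 / (p + q)) * (((k : ℂ) * p) * ((l : ℂ) * p) / ((k : ℂ) * p + (l : ℂ) * p)) *
          gchoose (-((k : ℂ) * p) / r) k * gchoose (-((l : ℂ) * p) / r) l := by
  simpa only [gchoose_eq_choose] using special_binomial_identity_general hp hq hr hCY (by omega)
end

section
/- There exists exactly one formal power series $V\in\mathbb{Q}[[X,E]]$ with zero constant term satisfying the difference equation $\sum_{0\le\alpha_1\le\cdots\le\alpha_m\le n}\exp\big(\sum_{j=1}^{m}S_{\alpha_j m-(j-1/2)n}(V)\big)=\binom{m+n}{m}\,(1+X)$. -/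
open MvPowerSeries

/-- The formal exponential of a multivariate power series (with zero constant term):
`fexp V = ∑_{n≥0} V^n / n!`, defined coefficientwise.  For a series `V` with zero constant
term, `V^n` has order at least `n`, so for a fixed monomial only the terms with
`n ≤ (total degree)` contribute, and the truncated sum below computes the exponential. -/
noncomputable def fexp (V : MvPowerSeries (Fin 2) ℚ) : MvPowerSeries (Fin 2) ℚ :=
  fun d => ∑ n ∈ Finset.range (d 0 + d 1 + 1),
    (Nat.factorial n : ℚ)⁻¹ * MvPowerSeries.coeff d (V ^ n)

/-- The shift `S_c : x ↦ x + cε`, i.e. the continuous `ℚ`-algebra endomorphism of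
`ℚ[[X,E]]` with `S_c(X) = X + c·E` and `S_c(E) = E`, described through its action on
coefficients: the coefficient of `X^i E^j` in `S_c V` is
`∑_{t=0}^{j} C(i+t,t) c^t · (coefficient of X^{i+t} E^{j-t} in V)`. -/
noncomputable def shiftS (c : ℚ) (V : MvPowerSeries (Fin 2) ℚ) : MvPowerSeries (Fin 2) ℚ :=
  fun d => ∑ t ∈ Finset.range (d 1 + 1),
    (Nat.choose (d 0 + t) t : ℚ) * c ^ t *
      MvPowerSeries.coeff (Finsupp.single 0 (d 0 + t) + Finsupp.single 1 (d 1 - t)) V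

/-- The difference equation
`∑_{0 ≤ α_1 ≤ ⋯ ≤ α_m ≤ n} exp(∑_{j=1}^m S_{α_j m - (j - 1/2) n}(V)) = C(m+n, m)·(1+X)`,
where the sum ranges over all monotone integer tuples `0 ≤ α_1 ≤ ⋯ ≤ α_m ≤ n`. -/
def diffEq (m n : ℕ) (V : MvPowerSeries (Fin 2) ℚ) : Prop :=
  ∑ α ∈ Finset.univ.filter
      (fun α : Fin m → Fin (n + 1) => ∀ i j : Fin m, i ≤ j → α i ≤ α j),
    fexp (∑ j : Fin m, shiftS ((α j : ℚ) * m - (((j : ℕ) : ℚ) + 1 / 2) * n) V)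
  = (Nat.choose (m + n) m : MvPowerSeries (Fin 2) ℚ) * (1 + MvPowerSeries.X 0)

/-!
Order the monomials by total degree and then by the exponent of `E`. With respect to this order
each shift `S_c` is unitriangular, and so is `exp` on series with zero constant term:
`U ^ k - W ^ k = (U - W) * ∑ U ^ i * W ^ (k - 1 - i)`, and for `k ≥ 2` the second factor has zero
constant term. Hence the left-hand side of the equation is triangular in the coefficients of `V`,
with the nonzero constant (number of summands) * (number of shifts) on the diagonal, and the
coefficients of `V` can be solved for one after another. Subtracting the constant term before
applying `exp`, and adding it back afterwards, turns the side condition `V(0) = 0` into the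
constant coefficient of the equation.
-/

section Triangular

variable {σ R β : Type*} [Ring R] [Preorder β] {ρ : (σ →₀ ℕ) → β} {u v : R}
  {F G : MvPowerSeries σ R → MvPowerSeries σ R}

/-- A (possibly nonlinear) operator on power series is triangular with diagonal entry `u`, for the
ranking `ρ` of the monomials, if the `d`-th coefficient of `F V` is `u` times the `d`-th
coefficient of `V` plus a quantity depending only on the coefficients of `V` of smaller rank. -/
def IsTriangular (ρ : (σ →₀ ℕ) → β) (u : R) (F : MvPowerSeries σ R → MvPowerSeries σ R) : Prop :=
  ∀ ⦃V W : MvPowerSeries σ R⦄ ⦃d : σ →₀ ℕ⦄, (∀ e, ρ e < ρ d → coeff e V = coeff e W) →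
    coeff d (F V) - coeff d (F W) = u * (coeff d V - coeff d W)

namespace IsTriangular

theorem comp (hF : IsTriangular ρ u F) (hG : IsTriangular ρ v G) :
    IsTriangular ρ (u * v) (F ∘ G) := by
  intro V W d h
  have hGV : ∀ e, ρ e < ρ d → coeff e (G V) = coeff e (G W) := fun e he ↦ by
    rw [← sub_eq_zero, hG fun e' he' ↦ h e' (he'.trans he), h e he, sub_self, mul_zero]
  rw [Function.comp_apply, Function.comp_apply, hF hGV, hG h, mul_assoc]

theorem sum {ι : Type*} {s : Finset ι} {u : ι → R}
    {F : ι → MvPowerSeries σ R → MvPowerSeries σ R} (hF : ∀ i ∈ s, IsTriangular ρ (u i) (F i)) :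
    IsTriangular ρ (∑ i ∈ s, u i) (fun V ↦ ∑ i ∈ s, F i V) := by
  intro V W d h
  rw [map_sum, map_sum, ← Finset.sum_sub_distrib, Finset.sum_mul]
  exact Finset.sum_congr rfl fun i hi ↦ hF i hi h

variable [WellFoundedLT β]

theorem injective (hF : IsTriangular ρ u F) (hu : IsUnit u) : Function.Injective F := by
  intro V W hVW
  ext d
  induction d using (InvImage.wf ρ wellFounded_lt).induction with
  | _ d ih =>
    have hd := hF ih
    rwa [hVW, sub_self, eq_comm, hu.mul_right_eq_zero, sub_eq_zero] at hd

theorem surjective (hF : IsTriangular ρ u F) (hu : IsUnit u) : Function.Surjective F := by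
  classical
  intro B
  obtain ⟨u, rfl⟩ := hu
  have wf : WellFounded fun e d : σ →₀ ℕ ↦ ρ e < ρ d := InvImage.wf ρ wellFounded_lt
  let truncate (d : σ →₀ ℕ) (f : ∀ e, ρ e < ρ d → R) : MvPowerSeries σ R :=
    fun e ↦ if h : ρ e < ρ d then f e h else 0
  let V : MvPowerSeries σ R := wf.fix fun d f ↦ ↑u⁻¹ * (coeff d B - coeff d (F (truncate d f)))
  refine ⟨V, ext fun d ↦ ?_⟩
  let T : MvPowerSeries σ R := truncate d fun e _ ↦ V e
  have hV : coeff d V = ↑u⁻¹ * (coeff d B - coeff d (F T)) := wf.fix_eq _ d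
  have hT : coeff d T = 0 := dif_neg (lt_irrefl _)
  have hVT : ∀ e, ρ e < ρ d → coeff e V = coeff e T := fun e he ↦
    (dif_pos he : coeff e T = coeff e V).symm
  have hd := hF hVT
  rwa [hT, sub_zero, hV, Units.mul_inv_cancel_left, sub_left_inj] at hd

theorem bijective (hF : IsTriangular ρ u F) (hu : IsUnit u) : Function.Bijective F :=
  ⟨hF.injective hu, hF.surjective hu⟩

end IsTriangular

end Triangular

section LowestCoefficients

variable {σ R : Type*}

theorem coeff_mul_of_forall_lt_coeff_eq_zero [Semiring R] {φ : MvPowerSeries σ R} {d : σ →₀ ℕ}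
    (hφ : ∀ e < d, coeff e φ = 0) (ψ : MvPowerSeries σ R) :
    coeff d (φ * ψ) = coeff d φ * constantCoeff ψ := by
  classical
  rw [coeff_mul, Finset.sum_eq_single (d, 0), coeff_zero_eq_constantCoeff_apply]
  · rintro ⟨e, f⟩ hef hne
    obtain rfl : e + f = d := Finset.HasAntidiagonal.mem_antidiagonal.mp hef
    have hf : f ≠ 0 := by
      rintro rfl
      exact hne (by rw [add_zero])
    rw [hφ e (lt_add_of_pos_right e (pos_iff_ne_zero.mpr hf)), zero_mul]
  · exact fun h ↦ absurd (Finset.HasAntidiagonal.mem_antidiagonal.mpr (add_zero d)) h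

theorem coeff_pow_eq_of_forall_lt_coeff_eq [CommRing R] {φ ψ : MvPowerSeries σ R} {d : σ →₀ ℕ}
    (hφ : constantCoeff φ = 0) (hψ : constantCoeff ψ = 0)
    (h : ∀ e < d, coeff e φ = coeff e ψ) {k : ℕ} (hk : k ≠ 1) :
    coeff d (φ ^ k) = coeff d (ψ ^ k) := by
  have hsum : constantCoeff (∑ i ∈ Finset.range k, φ ^ i * ψ ^ (k - 1 - i)) = 0 := by
    rw [map_sum]
    refine Finset.sum_eq_zero fun i hi ↦ ?_
    have hi : i ≠ 0 ∨ k - 1 - i ≠ 0 := by grind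
    rw [map_mul, map_pow, map_pow, hφ, hψ]
    rcases hi with hi | hi
    · rw [zero_pow hi, zero_mul]
    · rw [zero_pow hi, mul_zero]
  have hsub : ∀ e < d, coeff e (φ - ψ) = 0 := fun e he ↦ by rw [map_sub, h e he, sub_self]
  rw [← sub_eq_zero, ← map_sub, ← (Commute.all φ ψ).mul_geom_sum₂,
    coeff_mul_of_forall_lt_coeff_eq_zero hsub, hsum, mul_zero]

end LowestCoefficients

/-- The rank of the monomial `X ^ d 0 * E ^ d 1`: its total degree and then its exponent of `E`,
compared lexicographically. -/
def monomialRank (d : Fin 2 →₀ ℕ) : ℕ ×ₗ ℕ :=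
  toLex (d 0 + d 1, d 1)

theorem monomialRank_lt_iff {e d : Fin 2 →₀ ℕ} :
    monomialRank e < monomialRank d ↔
      e 0 + e 1 < d 0 + d 1 ∨ e 0 + e 1 = d 0 + d 1 ∧ e 1 < d 1 :=
  Prod.Lex.toLex_lt_toLex

theorem monomialRank_strictMono : StrictMono monomialRank := by
  intro e d h
  have hle : ∀ i, e i ≤ d i := h.le
  have hne : e 0 ≠ d 0 ∨ e 1 ≠ d 1 := by
    by_contra! heq
    exact h.ne (Finsupp.ext (Fin.forall_fin_two.mpr heq))
  have h0 := hle 0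
  have h1 := hle 1
  rw [monomialRank_lt_iff]
  lia

theorem coeff_shiftS (c : ℚ) (V : MvPowerSeries (Fin 2) ℚ) (d : Fin 2 →₀ ℕ) :
    coeff d (shiftS c V) = ∑ t ∈ Finset.range (d 1 + 1), (Nat.choose (d 0 + t) t : ℚ) * c ^ t *
      coeff (Finsupp.single 0 (d 0 + t) + Finsupp.single 1 (d 1 - t)) V :=
  rfl

theorem constantCoeff_shiftS (c : ℚ) (V : MvPowerSeries (Fin 2) ℚ) :
    constantCoeff (shiftS c V) = constantCoeff V := by
  rw [← coeff_zero_eq_constantCoeff_apply, coeff_shiftS]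
  simp

theorem isTriangular_shiftS (c : ℚ) : IsTriangular monomialRank 1 (shiftS c) := by
  intro V W d h
  rw [coeff_shiftS, coeff_shiftS, ← Finset.sum_sub_distrib, Finset.sum_eq_single 0, one_mul]
  · have hd : Finsupp.single 0 (d 0) + Finsupp.single 1 (d 1) = d := by
      ext i
      fin_cases i <;> simp
    simp [hd]
  · intro t ht ht0
    have hrank : monomialRank (Finsupp.single 0 (d 0 + t) + Finsupp.single 1 (d 1 - t)) <
        monomialRank d := by
      rw [Finset.mem_range] at ht
      refine monomialRank_lt_iff.mpr (Or.inr ⟨?_, ?_⟩) <;> simp <;> lia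
    rw [h _ hrank, sub_self]
  · simp

theorem coeff_fexp (V : MvPowerSeries (Fin 2) ℚ) (d : Fin 2 →₀ ℕ) :
    coeff d (fexp V) =
      ∑ k ∈ Finset.range (d 0 + d 1 + 1), (Nat.factorial k : ℚ)⁻¹ * coeff d (V ^ k) :=
  rfl

theorem constantCoeff_fexp (V : MvPowerSeries (Fin 2) ℚ) : constantCoeff (fexp V) = 1 := by
  rw [← coeff_zero_eq_constantCoeff_apply, coeff_fexp]
  simp

theorem coeff_fexp_sub_coeff_fexp {U W : MvPowerSeries (Fin 2) ℚ} {d : Fin 2 →₀ ℕ}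
    (hU : constantCoeff U = 0) (hW : constantCoeff W = 0)
    (h : ∀ e < d, coeff e U = coeff e W) :
    coeff d (fexp U) - coeff d (fexp W) = coeff d U - coeff d W := by
  rcases eq_or_ne d 0 with rfl | hd
  · simp only [coeff_zero_eq_constantCoeff_apply, constantCoeff_fexp, hU, hW, sub_self]
  rw [coeff_fexp, coeff_fexp, ← Finset.sum_sub_distrib, Finset.sum_eq_single 1]
  · simp
  · intro k _ hk
    rw [coeff_pow_eq_of_forall_lt_coeff_eq hU hW h hk, sub_self]
  · have hpos : 0 < d 0 + d 1 := by
      by_contra! hle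
      exact hd (Finsupp.ext (Fin.forall_fin_two.mpr (by simpa using hle)))
    exact fun h1 ↦ absurd (Finset.mem_range.mpr (Nat.succ_lt_succ hpos)) h1

/-- An extension of `fexp` from the series with zero constant term to all series: the constant term
is removed before exponentiating and added back afterwards. Unlike `fexp` itself, it is triangular
on all series. -/
noncomputable def fexpExt (V : MvPowerSeries (Fin 2) ℚ) : MvPowerSeries (Fin 2) ℚ :=
  fexp (V - C (constantCoeff V)) + C (constantCoeff V)

theorem fexpExt_of_constantCoeff_eq_zero {V : MvPowerSeries (Fin 2) ℚ}
    (hV : constantCoeff V = 0) : fexpExt V = fexp V := by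
  rw [fexpExt, hV, map_zero, sub_zero, add_zero]

theorem constantCoeff_fexpExt (V : MvPowerSeries (Fin 2) ℚ) :
    constantCoeff (fexpExt V) = 1 + constantCoeff V := by
  rw [fexpExt, map_add, constantCoeff_fexp, constantCoeff_C]

theorem isTriangular_fexpExt : IsTriangular monomialRank 1 fexpExt := by
  intro V W d h
  have hconst (U : MvPowerSeries (Fin 2) ℚ) : constantCoeff (U - C (constantCoeff U)) = 0 := by
    rw [map_sub, constantCoeff_C, sub_self]
  have hlow : ∀ e < d, coeff e (V - C (constantCoeff V)) = coeff e (W - C (constantCoeff W)) := by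
    intro e he
    have h0 : constantCoeff V = constantCoeff W :=
      h 0 (monomialRank_strictMono (zero_le.trans_lt he))
    rw [map_sub, map_sub, h e (monomialRank_strictMono he), h0]
  have hexp := coeff_fexp_sub_coeff_fexp (hconst V) (hconst W) hlow
  rw [map_sub, map_sub] at hexp
  rw [fexpExt, fexpExt, map_add, map_add]
  linear_combination hexp

-- Sorting a tuple identifies monotone tuples with multisets.
theorem card_monotone_fin {α : Type*} [Fintype α] [LinearOrder α] (m : ℕ) :
    Fintype.card {f : Fin m → α // Monotone f} = (Fintype.card α).multichoose m := by
  let toSym (f : {f : Fin m → α // Monotone f}) : Sym α m := ⟨List.ofFn f.1, by simp⟩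
  rw [← Sym.card_sym_eq_multichoose]
  refine Fintype.card_of_bijective (f := toSym) ⟨?_, ?_⟩
  · intro f g hfg
    have hperm : (List.ofFn f.1).Perm (List.ofFn g.1) :=
      Multiset.coe_eq_coe.mp (congrArg Subtype.val hfg)
    exact Subtype.ext (List.ofFn_injective
      (hperm.eq_of_pairwise' f.2.sortedLE_ofFn.pairwise g.2.sortedLE_ofFn.pairwise))
  · rintro ⟨⟨l⟩, hl⟩
    obtain rfl : l.length = m := hl
    refine ⟨⟨l.get ∘ Tuple.sort l.get, Tuple.monotone_sort l.get⟩, Subtype.ext ?_⟩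
    have hperm := Equiv.Perm.ofFn_comp_perm (Tuple.sort l.get) l.get
    rw [List.ofFn_get] at hperm
    exact Multiset.coe_eq_coe.mpr hperm

theorem card_filter_monotone_fin_fin (m n : ℕ) :
    (Finset.univ.filter
      (fun α : Fin m → Fin (n + 1) => ∀ i j : Fin m, i ≤ j → α i ≤ α j)).card =
      Nat.choose (m + n) m := by
  have h := card_monotone_fin (α := Fin (n + 1)) m
  rw [Fintype.card_subtype, Fintype.card_fin, Nat.multichoose_eq] at h
  rw [show m + n = n + 1 + m - 1 by lia, ← h]
  simp only [Monotone]

section DifferenceOperator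

variable {κ ι : Type*} [Fintype ι]

theorem isTriangular_sum_fexpExt_sum_shiftS (s : Finset κ) (c : κ → ι → ℚ) :
    IsTriangular monomialRank (s.card * Fintype.card ι : ℚ)
      (fun V ↦ ∑ a ∈ s, fexpExt (∑ j, shiftS (c a j) V)) := by
  have hsum : IsTriangular monomialRank (∑ _a ∈ s, (1 : ℚ) * ∑ _j : ι, 1)
      (fun V ↦ ∑ a ∈ s, fexpExt (∑ j, shiftS (c a j) V)) :=
    .sum fun a _ ↦ isTriangular_fexpExt.comp (.sum fun j _ ↦ isTriangular_shiftS (c a j))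
  simpa using hsum

theorem sum_fexpExt_eq_iff [Nonempty ι] {s : Finset κ} (hs : s.Nonempty) (c : κ → ι → ℚ)
    {B V : MvPowerSeries (Fin 2) ℚ} (hB : constantCoeff B = s.card) :
    ∑ a ∈ s, fexpExt (∑ j, shiftS (c a j) V) = B ↔
      constantCoeff V = 0 ∧ ∑ a ∈ s, fexp (∑ j, shiftS (c a j) V) = B := by
  have hs0 : (s.card : ℚ) ≠ 0 := Nat.cast_ne_zero.mpr hs.card_ne_zero
  have hV_of_eq (h : ∑ a ∈ s, fexpExt (∑ j, shiftS (c a j) V) = B) : constantCoeff V = 0 := by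
    have h0 := congrArg constantCoeff h
    simpa [constantCoeff_fexpExt, constantCoeff_shiftS, hB, mul_add, hs0] using h0
  have hsum_eq (hV : constantCoeff V = 0) : ∑ a ∈ s, fexpExt (∑ j, shiftS (c a j) V) =
      ∑ a ∈ s, fexp (∑ j, shiftS (c a j) V) :=
    Finset.sum_congr rfl fun a _ ↦ fexpExt_of_constantCoeff_eq_zero <| by
      simp only [map_sum, constantCoeff_shiftS, hV, Finset.sum_const_zero]
  exact ⟨fun h ↦ ⟨hV_of_eq h, hsum_eq (hV_of_eq h) ▸ h⟩, fun ⟨hV, h⟩ ↦ hsum_eq hV ▸ h⟩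

theorem existsUnique_solution_of_difference_equation_general [Nonempty ι] {s : Finset κ}
    (hs : s.Nonempty) (c : κ → ι → ℚ) {B : MvPowerSeries (Fin 2) ℚ}
    (hB : constantCoeff B = s.card) :
    ∃! V : MvPowerSeries (Fin 2) ℚ,
      constantCoeff V = 0 ∧ ∑ a ∈ s, fexp (∑ j, shiftS (c a j) V) = B := by
  have hdiag : (s.card * Fintype.card ι : ℚ) ≠ 0 :=
    mul_ne_zero (Nat.cast_ne_zero.mpr hs.card_ne_zero) (Nat.cast_ne_zero.mpr Fintype.card_ne_zero)
  have hbij := (isTriangular_sum_fexpExt_sum_shiftS s c).bijective hdiag.isUnit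
  simpa only [sum_fexpExt_eq_iff hs c hB] using hbij.existsUnique B

end DifferenceOperator

/-- There is exactly one formal power series `V ∈ ℚ[[X,E]]` with zero constant term
satisfying the difference equation
`∑_{0 ≤ α_1 ≤ ⋯ ≤ α_m ≤ n} exp(∑_{j=1}^m S_{α_j m-(j-1/2)n}(V)) = C(m+n, m)·(1+X)`. -/
theorem existsUnique_solution_of_difference_equation
    (m n : ℕ) (hm : 0 < m) (hn : 0 < n) (hmn : Nat.Coprime m n) :
    ∃! V : MvPowerSeries (Fin 2) ℚ,
      MvPowerSeries.constantCoeff V = 0 ∧ diffEq m n V := by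
  have hm' : Nonempty (Fin m) := Fin.pos_iff_nonempty.mp hm
  refine existsUnique_solution_of_difference_equation_general ?_ _ ?_
  · rw [← Finset.card_pos, card_filter_monotone_fin_fin]
    exact Nat.choose_pos (Nat.le_add_right m n)
  · simp [card_filter_monotone_fin_fin]
end

section
/- For every integer $k\ge1$, the Virasoro-type operators satisfy the commutation relation $L_0\circ L_k-L_k\circ L_0=-k\,L_k$ as $K$-linear operators on $R$. -/
open MvPolynomial

/-- The index set `𝓘 = {j/m : j ≥ 1} ∪ {j/n : j ≥ 1} ⊂ ℚ`. -/
def Idx (m n : ℕ) : Set ℚ :=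
  {q | (∃ j : ℕ, 0 < j ∧ q = (j : ℚ) / m) ∨ (∃ j : ℕ, 0 < j ∧ q = (j : ℚ) / n)}

lemma Idx.div_m_mem (m n : ℕ) {i : ℕ} (hi : 0 < i) : ((i : ℚ) / m) ∈ Idx m n :=
  Or.inl ⟨i, hi, rfl⟩

lemma Idx.div_n_mem (m n : ℕ) {i : ℕ} (hi : 0 < i) : ((i : ℚ) / n) ∈ Idx m n :=
  Or.inr ⟨i, hi, rfl⟩

lemma Idx.natCast_mem (m n : ℕ) (hm : 0 < m) {k : ℕ} (hk : 0 < k) :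
    ((k : ℚ)) ∈ Idx m n :=
  Or.inl ⟨k * m, by positivity, by push_cast; field_simp⟩

lemma Idx.add_natCast_mem (m n : ℕ) (hm : 0 < m) (hn : 0 < n) {q : ℚ}
    (h : q ∈ Idx m n) (k : ℕ) : q + (k : ℚ) ∈ Idx m n := by
  rcases h with ⟨j, hj, rfl⟩ | ⟨j, hj, rfl⟩
  · exact Or.inl ⟨j + k * m, by positivity, by push_cast; field_simp⟩
  · exact Or.inr ⟨j + k * n, by positivity, by push_cast; field_simp⟩

/-- The coefficient field `K = ℂ((ε))` of formal Laurent series, and `ε` itself. -/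
noncomputable def eps : LaurentSeries ℂ := HahnSeries.single (1 : ℤ) (1 : ℂ)

/-- The Virasoro operator
`L_0 = ∑_{μ∈𝓘} μ T_μ ∂_{T_μ} + x²/(2mnh ε²) + σ_1/24 - γ ∂_{T_1}` acting on
`R = K[x, T_μ (μ ∈ 𝓘)]`, where `γ = (m-1)!(n-1)!/(m+n)!` and `σ_1 = 1/h - 1/m - 1/n`.
The middle two terms act by multiplication. -/
noncomputable def L0op (m n : ℕ) (hm : 0 < m) (hn : 0 < n)
    (p : MvPolynomial (Unit ⊕ ↥(Idx m n)) (LaurentSeries ℂ)) :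
    MvPolynomial (Unit ⊕ ↥(Idx m n)) (LaurentSeries ℂ) :=
  (∑ᶠ μ : ↥(Idx m n),
      (((μ : ℚ) : LaurentSeries ℂ)) • (X (Sum.inr μ) * pderiv (Sum.inr μ) p))
  + C ((((2 * m * n * (m + n) : ℚ) : LaurentSeries ℂ) * eps ^ 2)⁻¹) *
      X (Sum.inl ()) ^ 2 * p
  + C (((1 / ((m : ℚ) + n) - 1 / m - 1 / n) / 24 : ℚ) : LaurentSeries ℂ) * p
  - C ((((Nat.factorial (m - 1) * Nat.factorial (n - 1) : ℚ) /
        (Nat.factorial (m + n) : ℚ)) : LaurentSeries ℂ)) *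
      pderiv (Sum.inr ⟨(1 : ℚ), Idx.natCast_mem m n hm Nat.one_pos⟩) p

/-- The Virasoro operator, for `k ≥ 1`,
`L_k = ∑_{μ∈𝓘} μ T_μ ∂_{T_{μ+k}} + (x/(mn)) ∂_{T_k} - γ ∂_{T_{1+k}}
 + (ε²/2m) ∑_{λ+μ=k, λ,μ∈𝓘₁} ∂_{T_λ}∂_{T_μ} + (ε²/2n) ∑_{λ+μ=k, λ,μ∈𝓘₂} ∂_{T_λ}∂_{T_μ}`,
where the pairs `(λ,μ) ∈ 𝓘₁²` with `λ+μ = k` are exactly `(i/m, (km-i)/m)`, `0 < i < km`,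
and similarly for `𝓘₂`. -/
noncomputable def Lkop (m n : ℕ) (hm : 0 < m) (hn : 0 < n) (k : ℕ) (hk : 1 ≤ k)
    (p : MvPolynomial (Unit ⊕ ↥(Idx m n)) (LaurentSeries ℂ)) :
    MvPolynomial (Unit ⊕ ↥(Idx m n)) (LaurentSeries ℂ) :=
  (∑ᶠ μ : ↥(Idx m n),
      (((μ : ℚ) : LaurentSeries ℂ)) •
        (X (Sum.inr μ) *
          pderiv (Sum.inr ⟨(μ : ℚ) + (k : ℚ), Idx.add_natCast_mem m n hm hn μ.2 k⟩) p))
  + C ((((m * n : ℚ) : LaurentSeries ℂ))⁻¹) * X (Sum.inl ()) *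
      pderiv (Sum.inr ⟨((k : ℚ)), Idx.natCast_mem m n hm hk⟩) p
  - C ((((Nat.factorial (m - 1) * Nat.factorial (n - 1) : ℚ) /
        (Nat.factorial (m + n) : ℚ)) : LaurentSeries ℂ)) *
      pderiv (Sum.inr ⟨((1 + k : ℕ) : ℚ),
        Idx.natCast_mem m n hm (by omega)⟩) p
  + C (eps ^ 2 / (((2 * m : ℚ) : LaurentSeries ℂ))) *
      ∑ i ∈ (Finset.Ioo 0 (k * m)).attach,
        pderiv (Sum.inr ⟨((i.1 : ℚ) / m),
            Idx.div_m_mem m n (Finset.mem_Ioo.mp i.2).1⟩)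
          (pderiv (Sum.inr ⟨(((k * m - i.1 : ℕ) : ℚ) / m),
            Idx.div_m_mem m n (by have := (Finset.mem_Ioo.mp i.2).2; omega)⟩) p)
  + C (eps ^ 2 / (((2 * n : ℚ) : LaurentSeries ℂ))) *
      ∑ i ∈ (Finset.Ioo 0 (k * n)).attach,
        pderiv (Sum.inr ⟨((i.1 : ℚ) / n),
            Idx.div_n_mem m n (Finset.mem_Ioo.mp i.2).1⟩)
          (pderiv (Sum.inr ⟨(((k * n - i.1 : ℕ) : ℚ) / n),
            Idx.div_n_mem m n (by have := (Finset.mem_Ioo.mp i.2).2; omega)⟩) p)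

/-!
Write `L₀ = E + V - γ ∂₁` and `L_k = G - γ ∂_{1+k}`, where `E` is the Euler field for the grading
with `deg T_μ = μ` and `deg x = 0`, and `V` is multiplication by a polynomial in `x` alone. Every
term of `G` lowers the degree by `k`, so `[E, G] = -k G`, whereas
`[E, ∂_{1+k}] = -(1+k) ∂_{1+k}`. The mismatch `γ ∂_{1+k}` is cancelled by
`[-γ ∂₁, G] = -γ ∂_{1+k}`, to which only the term `T₁ ∂_{1+k}` of `G` contributes. Finally `V`
commutes with `L_k`, which contains no `∂_x`.
-/

instance instCharZeroHahnSeries {Γ R : Type*} [AddCommMonoid Γ] [PartialOrder Γ]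
    [IsOrderedCancelAddMonoid Γ] [Semiring R] [CharZero R] : CharZero (HahnSeries Γ R) :=
  charZero_of_injective_ringHom HahnSeries.C_injective

section Operators

attribute [local instance] LieRing.ofAssociativeRing

theorem lie_add_sub_smul_sub_smul {R L : Type*} [CommRing R] [LieRing L] [LieAlgebra R L]
    {E V S G U : L} {d : R} (γ : R) (hEG : ⁅E, G⁆ = d • G) (hEU : ⁅E, U⁆ = (d - 1) • U)
    (hVG : ⁅V, G⁆ = 0) (hVU : ⁅V, U⁆ = 0) (hSG : ⁅S, G⁆ = U) (hSU : ⁅S, U⁆ = 0) :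
    ⁅E + V - γ • S, G - γ • U⁆ = d • (G - γ • U) := by
  simp only [lie_sub, sub_lie, add_lie, lie_smul, smul_lie, hEG, hEU, hVG, hVU, hSG, hSU]
  module

theorem mul_mem_eigenspace_ad {R A : Type*} [CommRing R] [Ring A] [Algebra R A] {e s t : A}
    {a b : R} (hs : s ∈ (LieAlgebra.ad R A e).eigenspace a)
    (ht : t ∈ (LieAlgebra.ad R A e).eigenspace b) :
    s * t ∈ (LieAlgebra.ad R A e).eigenspace (a + b) := by
  rw [Module.End.mem_eigenspace_iff, LieAlgebra.ad_apply] at *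
  calc ⁅e, s * t⁆ = ⁅e, s⁆ * t + s * ⁅e, t⁆ := by simp only [Ring.lie_def]; noncomm_ring
    _ = (a + b) • (s * t) := by rw [hs, ht, smul_mul_assoc, mul_smul_comm, add_smul]

theorem commute_lmul_derivation {R A : Type*} [CommSemiring R] [CommSemiring A] [Algebra R A]
    {D : Derivation R A A} {f : A} (hf : D f = 0) :
    Commute (Algebra.lmul R A f) (D : Module.End R A) :=
  LinearMap.ext fun p => by simp [hf]

theorem commute_lmul_aeval_derivation {R A : Type*} [CommSemiring R] [CommSemiring A]
    [Algebra R A] {D : Derivation R A A} {a : A} (ha : D a = 0) (f : Polynomial R) :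
    Commute (Algebra.lmul R A (Polynomial.aeval a f)) (D : Module.End R A) :=
  commute_lmul_derivation (by rw [Derivation.map_aeval, ha, smul_zero])

variable {R σ ι : Type*}

section CommSemiring

variable [CommSemiring R]

theorem derivation_apply_eq_sum_vars
    (D : Derivation R (MvPolynomial σ R) (MvPolynomial σ R)) (p : MvPolynomial σ R) :
    D p = ∑ i ∈ p.vars, D (X i) * pderiv i p := by
  classical
  have sum_apply (q : MvPolynomial σ R) :
      (∑ i ∈ p.vars, D (X i) • pderiv i) q = ∑ i ∈ p.vars, D (X i) * pderiv i q := by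
    rw [← Derivation.coeFnAddMonoidHom_apply, map_sum, Finset.sum_apply]
    rfl
  rw [← sum_apply]
  refine derivation_eq_of_forall_mem_vars fun j hj => ?_
  simp [sum_apply, Pi.single_apply, hj]

theorem derivation_apply_eq_finsum {g : ι → σ} (hg : Function.Injective g)
    {D : Derivation R (MvPolynomial σ R) (MvPolynomial σ R)}
    (hD : ∀ i ∉ Set.range g, D (X i) = 0) (p : MvPolynomial σ R) :
    D p = ∑ᶠ u, D (X (g u)) * pderiv (g u) p := by
  have support_subset_vars :
      Function.support (fun i => D (X i) * pderiv i p) ⊆ p.vars := fun i hi => by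
    contrapose! hi
    simp [pderiv_eq_zero_of_notMem_vars hi]
  have support_subset_range :
      Function.support (fun i => D (X i) * pderiv i p) ⊆ Set.range g := fun i hi => by
    contrapose! hi
    simp [hD i hi]
  calc D p = ∑ i ∈ p.vars, D (X i) * pderiv i p := derivation_apply_eq_sum_vars D p
    _ = ∑ᶠ i, D (X i) * pderiv i p :=
      (finsum_eq_finsetSum_of_support_subset _ support_subset_vars).symm
    _ = ∑ᶠ i ∈ Set.range g, D (X i) * pderiv i p := by
      rw [← finsum_mem_univ]
      exact finsum_mem_inter_support_eq' _ _ _ fun i hi => by simpa using support_subset_range hi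
    _ = ∑ᶠ u, D (X (g u)) * pderiv (g u) p := finsum_mem_range hg

/-- The partial derivative `∂ / ∂X i`, as an element of the algebra of all `R`-linear operators. -/
noncomputable abbrev pderivEnd (i : σ) : Module.End R (MvPolynomial σ R) :=
  (pderiv i : Derivation R (MvPolynomial σ R) (MvPolynomial σ R))

/-- The vector field `∑ u, c u • X (a u) ∂ / ∂X (g u)` with linear coefficients, for injective `g`.
The index type may be infinite, so it is encoded by its values on the variables. -/
noncomputable def linearVectorField (c : ι → R) (a g : ι → σ) :
    Derivation R (MvPolynomial σ R) (MvPolynomial σ R) :=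
  mkDerivation R (Function.extend g (fun u => c u • X (a u)) 0)

theorem linearVectorField_X_apply {g : ι → σ} (hg : Function.Injective g) (c : ι → R) (a : ι → σ)
    (u : ι) : linearVectorField c a g (X (g u)) = c u • X (a u) := by
  rw [linearVectorField, mkDerivation_X, hg.extend_apply]

theorem linearVectorField_X_of_notMem_range {g : ι → σ} {i : σ} (hi : i ∉ Set.range g)
    (c : ι → R) (a : ι → σ) : linearVectorField c a g (X i) = 0 := by
  rw [linearVectorField, mkDerivation_X, Function.extend_apply' _ _ _ hi, Pi.zero_apply]

theorem linearVectorField_apply {g : ι → σ} (hg : Function.Injective g) (c : ι → R) (a : ι → σ)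
    (p : MvPolynomial σ R) :
    linearVectorField c a g p = ∑ᶠ u, c u • (X (a u) * pderiv (g u) p) := by
  rw [derivation_apply_eq_finsum hg fun i hi => linearVectorField_X_of_notMem_range hi c a]
  simp only [linearVectorField_X_apply hg, smul_mul_assoc]

/-- The Euler vector field `∑ i, w i • X i ∂ / ∂X i` of the grading in which `X i` has
weight `w i`. -/
noncomputable def weightedEuler (w : σ → R) :
    Derivation R (MvPolynomial σ R) (MvPolynomial σ R) :=
  linearVectorField w id id

@[simp]
theorem weightedEuler_X (w : σ → R) (i : σ) : weightedEuler w (X i) = w i • X i :=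
  linearVectorField_X_apply Function.injective_id w id i

theorem weightedEuler_apply_eq_finsum {g : ι → σ} (hg : Function.Injective g) {w : σ → R}
    (hw : ∀ i ∉ Set.range g, w i = 0) (p : MvPolynomial σ R) :
    weightedEuler w p = ∑ᶠ u, w (g u) • (X (g u) * pderiv (g u) p) := by
  rw [derivation_apply_eq_finsum hg fun i hi => by rw [weightedEuler_X, hw i hi, zero_smul]]
  simp only [weightedEuler_X, smul_mul_assoc]

end CommSemiring

section CommRing

variable [CommRing R]

theorem commute_pderivEnd (i j : σ) :
    Commute (pderivEnd i : Module.End R (MvPolynomial σ R)) (pderivEnd j) := by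
  classical
  have lie_eq_zero : ⁅pderiv (R := R) i, pderiv (R := R) j⁆ = 0 :=
    derivation_ext fun l => by
      simp only [Derivation.commutator_apply, pderiv_X, Pi.single_apply]
      split_ifs <;> simp
  rw [commute_iff_lie_eq, ← Derivation.commutator_coe_linear_map, lie_eq_zero]
  rfl

theorem lie_pderivEnd_linearVectorField {a g : ι → σ} (ha : Function.Injective a)
    (hg : Function.Injective g) (c : ι → R) (u : ι) :
    ⁅pderivEnd (R := R) (a u), (linearVectorField c a g : Module.End R (MvPolynomial σ R))⁆ =
      c u • pderivEnd (g u) := by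
  classical
  suffices h : ⁅pderiv (R := R) (a u), linearVectorField c a g⁆ = c u • pderiv (g u) by
    rw [pderivEnd, ← Derivation.commutator_coe_linear_map, h, Derivation.coe_smul_linearMap]
  refine derivation_ext fun i => ?_
  have apply_pderiv_X : linearVectorField c a g (pderiv (a u) (X i)) = 0 := by
    rw [pderiv_X, Pi.single_apply]
    split_ifs <;> simp
  rw [Derivation.commutator_apply, apply_pderiv_X, sub_zero, Derivation.smul_apply]
  by_cases hi : i ∈ Set.range g
  · obtain ⟨v, rfl⟩ := hi
    rw [linearVectorField_X_apply hg, Derivation.map_smul, pderiv_X, pderiv_X]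
    rcases eq_or_ne v u with rfl | hvu
    · simp
    · simp [ha.ne hvu, hg.ne hvu]
  · rw [linearVectorField_X_of_notMem_range hi, map_zero,
      pderiv_X_of_ne fun h => hi ⟨u, h.symm⟩, smul_zero]

/-- The operators of weight `d`, i.e. those which shift by `d` the grading in which `X i` has
weight `w i`; encoded as the `d`-eigenspace of the commutator with the Euler vector field. -/
noncomputable def operatorsOfWeight (w : σ → R) (d : R) :
    Submodule R (Module.End R (MvPolynomial σ R)) :=
  (LieAlgebra.ad R _ (weightedEuler w : Module.End R (MvPolynomial σ R))).eigenspace d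

variable {w : σ → R} {d : R}

theorem mem_operatorsOfWeight_iff {T : Module.End R (MvPolynomial σ R)} :
    T ∈ operatorsOfWeight w d ↔ ⁅(weightedEuler w : Module.End R (MvPolynomial σ R)), T⁆ = d • T :=
  Module.End.mem_eigenspace_iff

theorem mul_mem_operatorsOfWeight {S T : Module.End R (MvPolynomial σ R)} {c : R}
    (hS : S ∈ operatorsOfWeight w c) (hT : T ∈ operatorsOfWeight w d) :
    S * T ∈ operatorsOfWeight w (c + d) :=
  mul_mem_eigenspace_ad hS hT

theorem derivation_mem_operatorsOfWeight
    {D : Derivation R (MvPolynomial σ R) (MvPolynomial σ R)}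
    (hD : ∀ i, weightedEuler w (D (X i)) = (w i + d) • D (X i)) :
    (D : Module.End R (MvPolynomial σ R)) ∈ operatorsOfWeight w d := by
  have lie_eq_smul : ⁅weightedEuler w, D⁆ = d • D := derivation_ext fun i => by
    rw [Derivation.commutator_apply, hD, weightedEuler_X, Derivation.map_smul, add_smul,
      add_sub_cancel_left, Derivation.smul_apply]
  rw [mem_operatorsOfWeight_iff, ← Derivation.commutator_coe_linear_map, lie_eq_smul,
    Derivation.coe_smul_linearMap]

theorem pderivEnd_mem_operatorsOfWeight (w : σ → R) (i : σ) :
    pderivEnd i ∈ operatorsOfWeight w (-w i) := by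
  classical
  refine derivation_mem_operatorsOfWeight fun j => ?_
  rcases eq_or_ne j i with rfl | hji
  · simp
  · simp [hji]

theorem linearVectorField_mem_operatorsOfWeight {a g : ι → σ} (hg : Function.Injective g)
    (h : ∀ u, w (a u) = w (g u) + d) (c : ι → R) :
    (linearVectorField c a g : Module.End R (MvPolynomial σ R)) ∈ operatorsOfWeight w d := by
  refine derivation_mem_operatorsOfWeight fun i => ?_
  by_cases hi : i ∈ Set.range g
  · obtain ⟨u, rfl⟩ := hi
    rw [linearVectorField_X_apply hg, Derivation.map_smul, weightedEuler_X, h, smul_comm]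
  · rw [linearVectorField_X_of_notMem_range hi, map_zero, smul_zero]

theorem lmul_mem_operatorsOfWeight {f : MvPolynomial σ R} (hf : weightedEuler w f = d • f) :
    Algebra.lmul R _ f ∈ operatorsOfWeight w d := by
  rw [mem_operatorsOfWeight_iff]
  refine LinearMap.ext fun p => ?_
  simp [Ring.lie_def, hf, mul_comm]

end CommRing

section Virasoro

variable {K : Type*} [Field K] {m n k : ℕ}

/-- The ring `K[x, T_μ (μ ∈ 𝓘)]` on which the Virasoro operators act. -/
abbrev VirasoroRing (K : Type*) [Field K] (m n : ℕ) : Type _ :=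
  MvPolynomial (Unit ⊕ ↥(Idx m n)) K

/-- The grading of the variables for which the Euler vector field is `∑_{μ∈𝓘} μ T_μ ∂_{T_μ}`. -/
def varWeight (K : Type*) [Field K] (m n : ℕ) : Unit ⊕ ↥(Idx m n) → K :=
  Sum.elim 0 fun μ => ((μ : ℚ) : K)

/-- The variable `T_{μ+k}`. -/
def shiftedVar (hm : 0 < m) (hn : 0 < n) (k : ℕ) (μ : ↥(Idx m n)) : Unit ⊕ ↥(Idx m n) :=
  Sum.inr ⟨(μ : ℚ) + k, Idx.add_natCast_mem m n hm hn μ.2 k⟩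

/-- The variable `T_k`. -/
def natVar (n : ℕ) (hm : 0 < m) (hk : 0 < k) : Unit ⊕ ↥(Idx m n) :=
  Sum.inr ⟨(k : ℚ), Idx.natCast_mem m n hm hk⟩

/-- The operator `∑_{λ+μ=k} ∂_{T_λ} ∂_{T_μ}`, where `λ` and `μ` run through `{j/d : j ≥ 1}`. -/
noncomputable def pairDerivSum (K : Type*) [Field K] {d : ℕ}
    (hd : ∀ {i : ℕ}, 0 < i → (i : ℚ) / d ∈ Idx m n) (k : ℕ) :
    Module.End K (VirasoroRing K m n) :=
  ∑ i ∈ (Finset.Ioo 0 (k * d)).attach,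
    pderivEnd (Sum.inr ⟨(i.1 : ℚ) / d, hd (Finset.mem_Ioo.mp i.2).1⟩) *
      pderivEnd (Sum.inr ⟨((k * d - i.1 : ℕ) : ℚ) / d,
        hd (Nat.sub_pos_of_lt (Finset.mem_Ioo.mp i.2).2)⟩)

/-- The operator `L_k` without its dilaton shift, i.e. without the term `-γ ∂_{T_{1+k}}`. The
coefficients `b` of `x ∂_{T_k}` and `c₁`, `c₂` of the two quadratic sums are arbitrary. -/
noncomputable def unshiftedVirasoro (hm : 0 < m) (hn : 0 < n) (hk : 0 < k) (b c₁ c₂ : K) :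
    Module.End K (VirasoroRing K m n) :=
  (linearVectorField (fun μ : ↥(Idx m n) => ((μ : ℚ) : K)) Sum.inr
      (shiftedVar hm hn k)).toLinearMap +
    b • (Algebra.lmul K _ (X (Sum.inl ())) * pderivEnd (natVar n hm hk)) +
    c₁ • pairDerivSum K (Idx.div_m_mem m n) k +
    c₂ • pairDerivSum K (Idx.div_n_mem m n) k

/-- The operator `L_0`, with an arbitrary polynomial `f` in `x` for the terms of order zero and an
arbitrary coefficient `γ` of the dilaton shift. -/
noncomputable def zerothVirasoro (n : ℕ) (hm : 0 < m) (f : Polynomial K) (γ : K) :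
    Module.End K (VirasoroRing K m n) :=
  (weightedEuler (varWeight K m n)).toLinearMap +
    Algebra.lmul K _ (Polynomial.aeval (X (Sum.inl ())) f) - γ • pderivEnd (natVar n hm one_pos)

/-- The operator `L_k` for `k ≥ 1`, with arbitrary coefficients as in `unshiftedVirasoro` and
`zerothVirasoro`. -/
noncomputable def positiveVirasoro (hm : 0 < m) (hn : 0 < n) (hk : 0 < k) (b c₁ c₂ γ : K) :
    Module.End K (VirasoroRing K m n) :=
  unshiftedVirasoro hm hn hk b c₁ c₂ - γ • pderivEnd (natVar n hm (Nat.add_pos_left one_pos k))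

@[simp]
theorem varWeight_inl (u : Unit) : varWeight K m n (Sum.inl u) = 0 := rfl

@[simp]
theorem varWeight_inr (μ : ↥(Idx m n)) : varWeight K m n (Sum.inr μ) = ((μ : ℚ) : K) := rfl

theorem shiftedVar_injective (hm : 0 < m) (hn : 0 < n) (k : ℕ) :
    Function.Injective (shiftedVar hm hn k) := fun _ _ h =>
  Subtype.ext (add_right_cancel (congrArg Subtype.val (Sum.inr_injective h)))

theorem inl_notMem_range_shiftedVar (hm : 0 < m) (hn : 0 < n) (k : ℕ) (u : Unit) :
    Sum.inl u ∉ Set.range (shiftedVar hm hn k) := by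
  rintro ⟨μ, h⟩
  exact Sum.inr_ne_inl h

theorem natCast_div_add_natCast_sub_div {d i : ℕ} (hi : i < k * d) :
    (i : ℚ) / d + ((k * d - i : ℕ) : ℚ) / d = k := by
  have hd : (d : ℚ) ≠ 0 := by
    intro h
    simp [Nat.cast_eq_zero.mp h] at hi
  rw [Nat.cast_sub hi.le]
  push_cast
  field_simp
  ring

theorem commute_pairDerivSum {d : ℕ} (hd : ∀ {i : ℕ}, 0 < i → (i : ℚ) / d ∈ Idx m n) (k : ℕ)
    {T : Module.End K (VirasoroRing K m n)}
    (hT : ∀ μ : ↥(Idx m n), Commute T (pderivEnd (Sum.inr μ))) :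
    Commute T (pairDerivSum K hd k) :=
  Commute.sum_right _ _ _ fun _ _ => (hT _).mul_right (hT _)

theorem commute_lmul_aeval_pderivEnd (f : Polynomial K) (μ : ↥(Idx m n)) :
    Commute (Algebra.lmul K _ (Polynomial.aeval (X (Sum.inl ())) f)) (pderivEnd (Sum.inr μ)) :=
  commute_lmul_aeval_derivation (pderiv_X_of_ne Sum.inl_ne_inr) f

theorem commute_lmul_aeval_unshiftedVirasoro (hm : 0 < m) (hn : 0 < n) (hk : 0 < k)
    (f : Polynomial K) (b c₁ c₂ : K) :
    Commute (Algebra.lmul K _ (Polynomial.aeval (X (Sum.inl ())) f))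
      (unshiftedVirasoro hm hn hk b c₁ c₂) := by
  have commute_linear := commute_lmul_aeval_derivation
    (linearVectorField_X_of_notMem_range (inl_notMem_range_shiftedVar hm hn k ())
      (fun μ : ↥(Idx m n) => ((μ : ℚ) : K)) Sum.inr) f
  have commute_lmul_X :
      Commute (Algebra.lmul K _ (Polynomial.aeval (X (Sum.inl ())) f))
        (Algebra.lmul K (VirasoroRing K m n) (X (Sum.inl ()))) :=
    (Commute.all _ _).map _
  have commute_pair {d : ℕ} (hd : ∀ {i : ℕ}, 0 < i → (i : ℚ) / d ∈ Idx m n) :=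
    commute_pairDerivSum hd k (commute_lmul_aeval_pderivEnd f)
  exact ((commute_linear.add_right
    ((commute_lmul_X.mul_right (commute_lmul_aeval_pderivEnd f _)).smul_right b)).add_right
    ((commute_pair _).smul_right c₁)).add_right ((commute_pair _).smul_right c₂)

section CharZero

variable [CharZero K]

theorem pairDerivSum_mem_operatorsOfWeight {d : ℕ}
    (hd : ∀ {i : ℕ}, 0 < i → (i : ℚ) / d ∈ Idx m n) (k : ℕ) :
    pairDerivSum K hd k ∈ operatorsOfWeight (varWeight K m n) (-(k : K)) := by
  refine Submodule.sum_mem _ fun i _ => ?_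
  have weight_add := natCast_div_add_natCast_sub_div (Finset.mem_Ioo.mp i.2).2
  convert mul_mem_operatorsOfWeight (pderivEnd_mem_operatorsOfWeight (varWeight K m n) _)
    (pderivEnd_mem_operatorsOfWeight (varWeight K m n) _) using 1
  rw [varWeight_inr, varWeight_inr, ← neg_add, ← Rat.cast_add, weight_add, Rat.cast_natCast]

theorem unshiftedVirasoro_mem_operatorsOfWeight (hm : 0 < m) (hn : 0 < n) (hk : 0 < k)
    (b c₁ c₂ : K) :
    unshiftedVirasoro hm hn hk b c₁ c₂ ∈ operatorsOfWeight (varWeight K m n) (-(k : K)) := by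
  have linear_mem := linearVectorField_mem_operatorsOfWeight (w := varWeight K m n)
    (d := -(k : K)) (a := Sum.inr) (shiftedVar_injective hm hn k)
    (fun μ => by simp [shiftedVar]) fun μ => ((μ : ℚ) : K)
  have lmul_pderiv_mem := mul_mem_operatorsOfWeight
    (lmul_mem_operatorsOfWeight (weightedEuler_X (varWeight K m n) (Sum.inl ())))
    (pderivEnd_mem_operatorsOfWeight (varWeight K m n) (natVar n hm hk))
  rw [natVar, varWeight_inl, varWeight_inr, zero_add, Rat.cast_natCast] at lmul_pderiv_mem
  exact add_mem (add_mem (add_mem linear_mem (Submodule.smul_mem _ b lmul_pderiv_mem))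
    (Submodule.smul_mem _ c₁ (pairDerivSum_mem_operatorsOfWeight _ k)))
    (Submodule.smul_mem _ c₂ (pairDerivSum_mem_operatorsOfWeight _ k))

end CharZero

theorem lie_pderivEnd_one_unshiftedVirasoro (hm : 0 < m) (hn : 0 < n) (hk : 0 < k)
    (b c₁ c₂ : K) :
    ⁅pderivEnd (R := K) (natVar n hm one_pos), unshiftedVirasoro hm hn hk b c₁ c₂⁆ =
      pderivEnd (natVar n hm (Nat.add_pos_left one_pos k)) := by
  have lie_linear := lie_pderivEnd_linearVectorField Sum.inr_injective
    (shiftedVar_injective hm hn k) (fun μ : ↥(Idx m n) => ((μ : ℚ) : K))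
    ⟨(1 : ℕ), Idx.natCast_mem m n hm one_pos⟩
  have commute_lmul_X := (commute_lmul_derivation (D := pderiv (R := K) (natVar n hm one_pos))
    (pderiv_X_of_ne (j := Sum.inl ()) Sum.inl_ne_inr)).symm
  have commute_pair {d : ℕ} (hd : ∀ {i : ℕ}, 0 < i → (i : ℚ) / d ∈ Idx m n) :=
    commute_pairDerivSum hd k fun _ => commute_pderivEnd (R := K) (natVar n hm one_pos) _
  have commute_remainder :=
    ((commute_lmul_X.mul_right (commute_pderivEnd _ (natVar n hm hk))).smul_right b).add_right
      (((commute_pair (Idx.div_m_mem m n)).smul_right c₁).add_right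
        ((commute_pair (Idx.div_n_mem m n)).smul_right c₂))
  rw [unshiftedVirasoro, add_assoc, add_assoc, lie_add, commute_remainder.lie_eq, add_zero, natVar,
    lie_linear]
  simp [shiftedVar, natVar]

theorem virasoro_commutation_general [CharZero K] (hm : 0 < m) (hn : 0 < n) (hk : 0 < k)
    (f : Polynomial K) (b c₁ c₂ γ : K) :
    ⁅zerothVirasoro n hm f γ, positiveVirasoro hm hn hk b c₁ c₂ γ⁆ =
      -(k : K) • positiveVirasoro hm hn hk b c₁ c₂ γ := by
  have weight_shift :
      -varWeight K m n (natVar n hm (Nat.add_pos_left one_pos k)) = -(k : K) - 1 := by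
    rw [natVar, varWeight_inr]
    push_cast
    ring
  have lie_euler_shift := mem_operatorsOfWeight_iff.mp (pderivEnd_mem_operatorsOfWeight
    (varWeight K m n) (natVar n hm (Nat.add_pos_left one_pos k)))
  rw [weight_shift] at lie_euler_shift
  exact lie_add_sub_smul_sub_smul γ
    (mem_operatorsOfWeight_iff.mp (unshiftedVirasoro_mem_operatorsOfWeight hm hn hk b c₁ c₂))
    lie_euler_shift
    (commute_lmul_aeval_unshiftedVirasoro hm hn hk f b c₁ c₂).lie_eq
    (commute_lmul_aeval_pderivEnd f _).lie_eq
    (lie_pderivEnd_one_unshiftedVirasoro hm hn hk b c₁ c₂)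
    (commute_pderivEnd _ _).lie_eq

theorem zerothVirasoro_apply (hm : 0 < m) (f : Polynomial K) (γ : K)
    (p : VirasoroRing K m n) :
    zerothVirasoro n hm f γ p =
      (∑ᶠ μ : ↥(Idx m n), ((μ : ℚ) : K) • (X (Sum.inr μ) * pderiv (Sum.inr μ) p)) +
        Polynomial.aeval (X (Sum.inl ())) f * p - C γ * pderiv (natVar n hm one_pos) p := by
  have varWeight_eq_zero (i : Unit ⊕ ↥(Idx m n)) (hi : i ∉ Set.range Sum.inr) :
      varWeight K m n i = 0 := by
    rcases i with u | μ
    · rfl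
    · exact absurd ⟨μ, rfl⟩ hi
  have euler_apply := weightedEuler_apply_eq_finsum Sum.inr_injective varWeight_eq_zero p
  simp [zerothVirasoro, euler_apply, smul_eq_C_mul]

theorem positiveVirasoro_apply (hm : 0 < m) (hn : 0 < n) (hk : 0 < k) (b c₁ c₂ γ : K)
    (p : VirasoroRing K m n) :
    positiveVirasoro hm hn hk b c₁ c₂ γ p =
      (∑ᶠ μ : ↥(Idx m n), ((μ : ℚ) : K) • (X (Sum.inr μ) * pderiv (shiftedVar hm hn k μ) p)) +
        C b * X (Sum.inl ()) * pderiv (natVar n hm hk) p -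
        C γ * pderiv (natVar n hm (Nat.add_pos_left one_pos k)) p +
        C c₁ * pairDerivSum K (Idx.div_m_mem m n) k p +
        C c₂ * pairDerivSum K (Idx.div_n_mem m n) k p := by
  have linear_apply := linearVectorField_apply (shiftedVar_injective hm hn k)
    (fun μ : ↥(Idx m n) => ((μ : ℚ) : K)) Sum.inr p
  simp only [positiveVirasoro, unshiftedVirasoro, Algebra.coe_lmul_eq_mul, LinearMap.sub_apply,
    LinearMap.add_apply, Derivation.coeFn_coe, linear_apply, smul_eq_C_mul, LinearMap.smul_apply,
    Module.End.mul_apply, LinearMap.mul_apply_apply]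
  ring

/-- The coefficient `γ = (m-1)!(n-1)!/(m+n)!` of the dilaton shift. -/
noncomputable def dilatonCoeff (m n : ℕ) : LaurentSeries ℂ :=
  ((Nat.factorial (m - 1) * Nat.factorial (n - 1) : ℚ) : LaurentSeries ℂ) /
    ((Nat.factorial (m + n) : ℚ) : LaurentSeries ℂ)

theorem L0op_eq_zerothVirasoro_apply (hm : 0 < m) (hn : 0 < n)
    (p : MvPolynomial (Unit ⊕ ↥(Idx m n)) (LaurentSeries ℂ)) :
    L0op m n hm hn p = zerothVirasoro n hm
      (Polynomial.C (((2 * m * n * (m + n) : ℚ) : LaurentSeries ℂ) * eps ^ 2)⁻¹ * Polynomial.X ^ 2 +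
        Polynomial.C (((1 / ((m : ℚ) + n) - 1 / m - 1 / n) / 24 : ℚ) : LaurentSeries ℂ))
      (dilatonCoeff m n) p := by
  rw [zerothVirasoro_apply]
  simp [L0op, natVar, dilatonCoeff, add_assoc, add_mul]

theorem Lkop_eq_positiveVirasoro_apply (hm : 0 < m) (hn : 0 < n) (hk : 0 < k)
    (p : MvPolynomial (Unit ⊕ ↥(Idx m n)) (LaurentSeries ℂ)) :
    Lkop m n hm hn k hk p = positiveVirasoro hm hn hk ((m * n : ℚ) : LaurentSeries ℂ)⁻¹
      (eps ^ 2 / ((2 * m : ℚ) : LaurentSeries ℂ)) (eps ^ 2 / ((2 * n : ℚ) : LaurentSeries ℂ))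
      (dilatonCoeff m n) p := by
  rw [positiveVirasoro_apply]
  simp only [pairDerivSum, LinearMap.sum_apply]
  rfl

end Virasoro

end Operators

/-- The Virasoro commutation relation `[L_0, L_k] = -k L_k` for every `k ≥ 1`, as
`K`-linear operators on `R = K[x, T_μ (μ ∈ 𝓘)]`. -/
theorem virasoro_commutation (m n : ℕ) (hm : 0 < m) (hn : 0 < n)
    (hmn : Nat.Coprime m n) (k : ℕ) (hk : 1 ≤ k)
    (p : MvPolynomial (Unit ⊕ ↥(Idx m n)) (LaurentSeries ℂ)) :
    L0op m n hm hn (Lkop m n hm hn k hk p) - Lkop m n hm hn k hk (L0op m n hm hn p)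
      = (-((k : ℚ) : LaurentSeries ℂ)) • Lkop m n hm hn k hk p := by
  simp only [L0op_eq_zerothVirasoro_apply, Lkop_eq_positiveVirasoro_apply, Rat.cast_natCast]
  exact LinearMap.congr_fun (virasoro_commutation_general hm hn hk _ _ _ _ _) p
end

section
/- There exists a unique formal power series $v\in\mathbb{Q}[[t_0,t_1,t_2,\dots]]$ with zero constant term satisfying the fixed-point equation $v=\sum_{i\ge0}t_i\,\frac{v^i}{i!}$. -/
/-!
Because of the factor `t_i`, the coefficient of a monomial `m` in `t_i v^i` involves only the
coefficients of `v` at proper divisors of `m`. Proper divisibility of monomials, which is the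
pointwise strict order on exponents, is well-founded, even with infinitely many variables. So the
fixed-point equation is a recursion determining every coefficient of `v`.
-/

/-- The right-hand side `∑_{i≥0} t_i v^i / i!` of the fixed-point equation, defined
coefficientwise.  When `v` has zero constant term, `t_i · v^i` has order at least `i+1`,
so for a fixed monomial `d` only the terms with `i ≤ (total degree of d)` contribute,
and the truncated sum below computes the full sum. -/
noncomputable def genusZeroRHS (v : MvPowerSeries ℕ ℚ) : MvPowerSeries ℕ ℚ :=
  fun d => ∑ i ∈ Finset.range (d.sum (fun _ e => e) + 1),
    (Nat.factorial i : ℚ)⁻¹ * MvPowerSeries.coeff d (MvPowerSeries.X i * v ^ i)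

theorem existsUnique_eq_apply_of_wellFounded {ι : Type*} {α : ι → Type*} [Nonempty (∀ i, α i)]
    {r : ι → ι → Prop} (hr : WellFounded r) {F : (∀ i, α i) → ∀ i, α i}
    (hF : ∀ {i u v}, (∀ j, r j i → u j = v j) → F u i = F v i) : ∃! u, u = F u := by
  classical
  obtain ⟨u₀⟩ := ‹Nonempty (∀ i, α i)›
  -- By `hF`, padding by `u₀` outside the part below `i` does not affect the value at `i`.
  let step (i : ι) (below : ∀ j, r j i → α j) : α i :=
    F (fun j => if h : r j i then below j h else u₀ j) i
  have fix_eq : hr.fix step = F (hr.fix step) := by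
    funext i
    rw [hr.fix_eq]
    exact hF fun j hj => dif_pos hj
  refine ⟨hr.fix step, fix_eq, fun v hv => funext fun i => ?_⟩
  induction i using hr.induction with
  | _ i ih =>
    rw [hv, fix_eq]
    exact hF ih

section CoeffCongr

open MvPowerSeries

variable {σ R : Type*} [Semiring R] {d : σ →₀ ℕ} {u v u' v' : MvPowerSeries σ R}

theorem coeff_mul_congr_of_le (h : ∀ e ≤ d, coeff e u = coeff e v)
    (h' : ∀ e ≤ d, coeff e u' = coeff e v') : coeff d (u * u') = coeff d (v * v') := by
  classical
  rw [coeff_mul, coeff_mul]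
  refine Finset.sum_congr rfl fun p hp => ?_
  rw [h p.1 (Finset.HasAntidiagonal.antidiagonal.fst_le hp),
    h' p.2 (Finset.HasAntidiagonal.antidiagonal.snd_le hp)]

theorem coeff_pow_congr_of_le (h : ∀ e ≤ d, coeff e u = coeff e v) (k : ℕ) :
    coeff d (u ^ k) = coeff d (v ^ k) := by
  induction k generalizing d with
  | zero => rw [pow_zero, pow_zero]
  | succ k ih =>
    rw [pow_succ, pow_succ]
    exact coeff_mul_congr_of_le (fun e he => ih fun c hc => h c (hc.trans he)) h

theorem coeff_X_mul_pow_congr_of_lt (h : ∀ e < d, coeff e u = coeff e v) (s : σ) (k : ℕ) :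
    coeff d (X s * u ^ k) = coeff d (X s * v ^ k) := by
  classical
  rw [X_def, coeff_monomial_mul, coeff_monomial_mul]
  split_ifs with hs
  · have single_pos : 0 < Finsupp.single s 1 := pos_of_ne_zero (by simp)
    have sub_lt : d - Finsupp.single s 1 < d :=
      (lt_add_of_pos_left _ single_pos).trans_eq (add_tsub_cancel_of_le hs)
    rw [coeff_pow_congr_of_le fun e he => h e (he.trans_lt sub_lt)]
  · rfl

end CoeffCongr

section GenusZero

open MvPowerSeries

theorem coeff_genusZeroRHS (v : MvPowerSeries ℕ ℚ) (d : ℕ →₀ ℕ) :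
    coeff d (genusZeroRHS v) =
      ∑ i ∈ Finset.range (d.degree + 1), (i.factorial : ℚ)⁻¹ * coeff d (X i * v ^ i) :=
  rfl

theorem constantCoeff_genusZeroRHS (v : MvPowerSeries ℕ ℚ) :
    constantCoeff (genusZeroRHS v) = 0 := by
  rw [← coeff_zero_eq_constantCoeff_apply, coeff_genusZeroRHS]
  exact Finset.sum_eq_zero fun i _ => by rw [coeff_zero_X_mul, mul_zero]

theorem coeff_genusZeroRHS_congr_of_lt {d : ℕ →₀ ℕ} {u v : MvPowerSeries ℕ ℚ}
    (h : ∀ e < d, coeff e u = coeff e v) :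
    coeff d (genusZeroRHS u) = coeff d (genusZeroRHS v) := by
  rw [coeff_genusZeroRHS, coeff_genusZeroRHS]
  exact Finset.sum_congr rfl fun i _ => by rw [coeff_X_mul_pow_congr_of_lt h]

end GenusZero

/-- There exists a unique formal power series `v ∈ ℚ[[t_0, t_1, t_2, …]]` with zero
constant term satisfying the fixed-point equation `v = ∑_{i≥0} t_i v^i / i!`. -/
theorem existsUnique_genus_zero_fixed_point :
    ∃! v : MvPowerSeries ℕ ℚ,
      MvPowerSeries.constantCoeff v = 0 ∧ v = genusZeroRHS v := by
  obtain ⟨v, hv, unique⟩ : ∃! v : MvPowerSeries ℕ ℚ, v = genusZeroRHS v :=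
    existsUnique_eq_apply_of_wellFounded wellFounded_lt coeff_genusZeroRHS_congr_of_lt
  have constantCoeff_eq_zero : MvPowerSeries.constantCoeff v = 0 := by
    rw [hv, constantCoeff_genusZeroRHS]
  exact ⟨v, ⟨constantCoeff_eq_zero, hv⟩, fun w hw => unique w hw.2⟩
end

section
/- The coefficient of $\epsilon^0$ in $D$ equals $\binom{m+n}{m}$, the coefficient of $\epsilon^1$ in $D$ vanishes, and the coefficient of $\epsilon^2$ in $D$ (an element of $A[[x]]$) equals $\binom{m+n}{m}\Big(\frac{mn(2mh-n)}{24}\,u''+\frac{m^3 n(h+1)}{24}\,(u')^2\Big)$, where $u'$ and $u''$ denote the first and second formal derivatives of $u$ with respect to $x$. -/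
open PowerSeries

variable (A : Type*) [CommRing A] [Algebra ℚ A]

/-- The image `u_c ∈ A[[x,ε]]` of `u ∈ A[[x]]` under the continuous `A`-algebra map
sending `x ↦ x + cε`, described coefficientwise: the coefficient of `x^i ε^j` in `u_c`
is `C(i+j, j) c^j` times the coefficient of `x^{i+j}` in `u`. -/
noncomputable def usub (c : ℚ) (u : PowerSeries A) : MvPowerSeries (Fin 2) A :=
  fun d => algebraMap ℚ A ((Nat.choose (d 0 + d 1) (d 1) : ℚ) * c ^ (d 1)) *
    PowerSeries.coeff (d 0 + d 1) u

/-- The formal exponential of a multivariate power series with zero constant term,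
`fexpA V = ∑_{n≥0} V^n / n!`, defined coefficientwise. -/
noncomputable def fexpA (V : MvPowerSeries (Fin 2) A) : MvPowerSeries (Fin 2) A :=
  fun d => ∑ n ∈ Finset.range (d 0 + d 1 + 1),
    MvPowerSeries.coeff d ((Nat.factorial n : ℚ)⁻¹ • V ^ n)

/-- The series `D = ∑_{0 ≤ α_1 ≤ ⋯ ≤ α_m ≤ n} exp(∑_{j=1}^m (u_{c_j} - u))` with
`c_j = α_j m - (j - 1/2) n`, the sum ranging over monotone tuples
`0 ≤ α_1 ≤ ⋯ ≤ α_m ≤ n`.  (Here `u` is regarded as an element of `A[[x,ε]]`, i.e. as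
`u_0 = usub A 0 u`.)  In operator language, `e^{mu}·D = Λ^{-n/2} res (Λ^m + e^u Λ^{-n})^{m+n}`. -/
noncomputable def Dser (m n : ℕ) (u : PowerSeries A) : MvPowerSeries (Fin 2) A :=
  ∑ α ∈ Finset.univ.filter
      (fun α : Fin m → Fin (n + 1) => ∀ i j : Fin m, i ≤ j → α i ≤ α j),
    fexpA A (∑ j : Fin m,
      (usub A ((α j : ℚ) * m - (((j : ℕ) : ℚ) + 1 / 2) * n) u - usub A 0 u))

/-! Expand `D` in powers of `ε` over `A[[x]]`. By Taylor's formula the `ε^k`-coefficient of `u_c` is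
`(c^k / k!) u⁽ᵏ⁾`, so the coefficients of `ε^0, ε^1, ε^2` in `D` only involve the number of tuples
and the sums over all tuples of `∑ c_j`, `∑ c_j²` and `(∑ c_j)²`. These are evaluated with
`c_j = α_j a - (j - 1/2) b` for arbitrary `a, b`, by induction on `m` and `n`: the tuples whose last
entry is less than `n + 1` are those bounded by `n`, the others are a shorter tuple followed by
`n + 1`. Setting `a = m` and `b = n` makes the first moment vanish. -/

section EpsExpansion

open Finsupp

variable {R : Type*} [CommSemiring R]

/-- A power series in `x` and `ε` as a power series in `ε` over `R⟦X⟧`. Index `0` stands for `x` and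
becomes the inner variable, index `1` stands for `ε` and becomes the outer one. -/
noncomputable def epsExpansion : MvPowerSeries (Fin 2) R ≃ₐ[R] R⟦X⟧⟦X⟧ :=
  (MvPowerSeries.renameEquiv R
    ((finSuccEquivLast (n := 1)).trans finOneEquiv.optionCongr)).trans
    (MvPowerSeries.optionEquivLeft Unit R)

theorem coeff_coeff_epsExpansion (F : MvPowerSeries (Fin 2) R) (i k : ℕ) :
    coeff i (coeff k (epsExpansion F)) = MvPowerSeries.coeff (single 0 i + single 1 k) F := by
  let e : Fin 2 ≃ Option Unit := (finSuccEquivLast (n := 1)).trans finOneEquiv.optionCongr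
  have exponent_eq :
      (single () i).optionElim k = embDomain e.toEmbedding (single 0 i + single 1 k) := by
    have e_zero : e 0 = some () := rfl
    have e_one : e 1 = none := rfl
    rw [embDomain_eq_mapDomain]
    ext (_ | _) <;> simp [mapDomain_add, e_zero, e_one]
  calc coeff i (coeff k (epsExpansion F))
      = MvPowerSeries.coeff ((single () i).optionElim k)
          (MvPowerSeries.rename e.toEmbedding F) :=
        MvPowerSeries.coeff_coeff_optionEquivLeft (MvPowerSeries.rename e.toEmbedding F) k
          (single () i)
    _ = MvPowerSeries.coeff (single 0 i + single 1 k) F := by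
        rw [exponent_eq, MvPowerSeries.coeff_embDomain_rename]

end EpsExpansion

section MonotoneTuples

open Finset

/-- The tuples `0 ≤ α_1 ≤ ⋯ ≤ α_m ≤ n`, valued in `ℕ` rather than in `Fin (n + 1)` so that tuples
with different bounds can be compared. -/
def monotoneTuples (m n : ℕ) : Finset (Fin m → ℕ) :=
  {α ∈ Fintype.piFinset fun _ => range (n + 1) | Monotone α}

theorem mem_monotoneTuples {m n : ℕ} {α : Fin m → ℕ} :
    α ∈ monotoneTuples m n ↔ (∀ j, α j ≤ n) ∧ Monotone α := by
  simp [monotoneTuples]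

theorem monotoneTuples_zero_left (n : ℕ) : monotoneTuples 0 n = {0} := by
  ext α
  simp [mem_monotoneTuples, Subsingleton.elim α 0, Subsingleton.monotone]

theorem monotoneTuples_zero_right (m : ℕ) : monotoneTuples m 0 = {0} := by
  ext α
  simp only [mem_monotoneTuples, nonpos_iff_eq_zero, mem_singleton, funext_iff, Pi.zero_apply,
    and_iff_left_iff_imp]
  intro h i j _
  simp [h]

theorem filter_last_le_monotoneTuples (m n : ℕ) :
    {α ∈ monotoneTuples (m + 1) (n + 1) | α (Fin.last m) ≤ n} = monotoneTuples (m + 1) n := by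
  ext α
  simp only [mem_filter, mem_monotoneTuples]
  exact ⟨fun ⟨⟨_, hmono⟩, hlast⟩ => ⟨fun j => (hmono (Fin.le_last j)).trans hlast, hmono⟩,
    fun ⟨hle, hmono⟩ => ⟨⟨fun j => (hle j).trans n.le_succ, hmono⟩, hle _⟩⟩

theorem snoc_mem_monotoneTuples {m n : ℕ} {α : Fin m → ℕ} :
    (Fin.snoc α n : Fin (m + 1) → ℕ) ∈ monotoneTuples (m + 1) n ↔ α ∈ monotoneTuples m n := by
  simp only [mem_monotoneTuples, Fin.forall_fin_succ', Monotone, Fin.snoc_castSucc, Fin.snoc_last,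
    le_refl, and_true, Fin.castSucc_le_castSucc_iff, Fin.le_last, forall_const]
  constructor
  · grind
  · rintro ⟨hle, hmono⟩
    simp_all [Fin.last_le_iff]

theorem sum_monotoneTuples_succ_succ {M : Type*} [AddCommMonoid M] (m n : ℕ)
    (f : (Fin (m + 1) → ℕ) → M) :
    ∑ α ∈ monotoneTuples (m + 1) (n + 1), f α =
      ∑ α ∈ monotoneTuples (m + 1) n, f α +
        ∑ α ∈ monotoneTuples m (n + 1), f (Fin.snoc α (n + 1)) := by
  have last_eq {α : Fin (m + 1) → ℕ}
      (hα : α ∈ {α ∈ monotoneTuples (m + 1) (n + 1) | ¬ α (Fin.last m) ≤ n}) :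
      Fin.snoc (Fin.init α) (n + 1) = α := by
    obtain ⟨hmem, hlast⟩ := mem_filter.1 hα
    have : α (Fin.last m) = n + 1 :=
      ((mem_monotoneTuples.1 hmem).1 _).antisymm (not_le.1 hlast)
    rw [← this, Fin.snoc_init_self]
  rw [← sum_filter_add_sum_filter_not _ fun α => α (Fin.last m) ≤ n,
    filter_last_le_monotoneTuples]
  congr 1
  refine sum_bij' (fun α _ => Fin.init α) (fun α _ => Fin.snoc α (n + 1)) (fun α hα => ?_)
    (fun α hα => ?_) (fun α hα => last_eq hα) (fun α _ => Fin.init_snoc _ _)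
    (fun α hα => by rw [last_eq hα])
  · rw [← snoc_mem_monotoneTuples, last_eq hα]
    exact (mem_filter.1 hα).1
  · simpa [snoc_mem_monotoneTuples] using hα

theorem sum_filter_eq_sum_monotoneTuples {M : Type*} [AddCommMonoid M] (m n : ℕ)
    (f : (Fin m → ℕ) → M) :
    ∑ α : Fin m → Fin (n + 1) with ∀ i j, i ≤ j → α i ≤ α j, f (fun j => α j) =
      ∑ α ∈ monotoneTuples m n, f α := by
  refine sum_nbij (fun α j => (α j : ℕ)) (fun α hα => ?_) (fun α _ β _ h => ?_) (fun α hα => ?_)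
    fun _ _ => rfl
  · exact mem_monotoneTuples.2 ⟨fun j => (α j).is_le, fun i j h => (mem_filter.1 hα).2 i j h⟩
  · exact funext fun j => Fin.ext (congrFun h j)
  · obtain ⟨hle, hmono⟩ := mem_monotoneTuples.1 hα
    exact ⟨fun j => ⟨α j, Nat.lt_succ_of_le (hle j)⟩,
      mem_coe.2 (mem_filter.2 ⟨mem_univ _, fun i j h => hmono h⟩), rfl⟩

theorem card_monotoneTuples (m n : ℕ) : (monotoneTuples m n).card = (m + n).choose m := by
  induction m generalizing n with
  | zero => simp [monotoneTuples_zero_left]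
  | succ m ihm =>
    induction n with
    | zero => simp [monotoneTuples_zero_right]
    | succ n ihn =>
      rw [card_eq_sum_ones, sum_monotoneTuples_succ_succ, ← card_eq_sum_ones, ← card_eq_sum_ones,
        ihn, ihm, ← add_assoc (m + 1) n 1, Nat.choose_succ_succ, add_comm, add_right_comm m 1 n,
        add_assoc]

/-- In the applications `T m n` is a sum over the `(m + n).choose m` monotone tuples and `p m n` is
the corresponding mean. -/
theorem eq_choose_mul_of_recurrence {T p g : ℕ → ℕ → ℚ}
    (T_zero_left : ∀ n, T 0 n = p 0 n) (T_zero_right : ∀ m, T m 0 = p m 0)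
    (T_rec : ∀ m n, T (m + 1) (n + 1) =
      T (m + 1) n + (T m (n + 1) + (m + (n + 1)).choose m * g m n))
    (p_rec : ∀ m n : ℕ, (m + n + 2) * p (m + 1) (n + 1) =
      (n + 1) * p (m + 1) n + (m + 1) * (p m (n + 1) + g m n)) (m n : ℕ) :
    T m n = (m + n).choose m * p m n := by
  induction m generalizing n with
  | zero => simp [T_zero_left]
  | succ m ihm =>
    induction n with
    | zero => simp [T_zero_right]
    | succ n ihn =>
      have absorb : ((m + 1 + (n + 1)).choose (m + 1) : ℚ) * (m + 1) =
          (m + n + 2) * (m + (n + 1)).choose m := by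
        have := Nat.add_one_mul_choose_eq (m + (n + 1)) m
        rw [show m + (n + 1) + 1 = m + 1 + (n + 1) by lia] at this
        push_cast [← @Nat.cast_inj ℚ] at this
        linear_combination -this
      have shift : ((m + 1 + n).choose (m + 1) : ℚ) * (m + 1) =
          (n + 1) * (m + (n + 1)).choose m := by
        have := Nat.choose_succ_right_eq (m + (n + 1)) m
        rw [show m + (n + 1) - m = n + 1 by lia] at this
        rw [show m + 1 + n = m + (n + 1) by lia]
        push_cast [← @Nat.cast_inj ℚ] at this
        linear_combination this
      refine mul_right_cancel₀ (Nat.cast_add_one_ne_zero m) ?_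
      rw [T_rec, ihn, ihm]
      linear_combination p (m + 1) n * shift - p (m + 1) (n + 1) * absorb
        - (m + (n + 1)).choose m * p_rec m n

/-- The paper's shifts `c_j`, for `a = m` and `b = n`. The index `j` starts at `0` here, which turns
`j - 1/2` into `j + 1/2`; `a` and `b` are independent of `m` and `n` because they have to stay fixed
in an induction on `m` and `n`. -/
def tupleShift (a b : ℚ) {m : ℕ} (α : Fin m → ℕ) (j : Fin m) : ℚ :=
  α j * a - (j + 1 / 2) * b

theorem tupleShift_zero (a b : ℚ) {m : ℕ} (j : Fin m) :
    tupleShift a b 0 j = -((j + 1 / 2) * b) := by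
  simp [tupleShift]

theorem sum_tupleShift_zero (a b : ℚ) (m : ℕ) :
    ∑ j : Fin m, tupleShift a b 0 j = -(m ^ 2 / 2 * b) := by
  simp only [tupleShift_zero]
  induction m with
  | zero => simp
  | succ m ih =>
    simp only [Fin.sum_univ_castSucc, Fin.val_castSucc, Fin.val_last, ih]
    push_cast
    ring

theorem sum_tupleShift_zero_sq (a b : ℚ) (m : ℕ) :
    ∑ j : Fin m, tupleShift a b 0 j ^ 2 = m * (4 * m ^ 2 - 1) / 12 * b ^ 2 := by
  simp only [tupleShift_zero]
  induction m with
  | zero => simp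
  | succ m ih =>
    simp only [Fin.sum_univ_castSucc, Fin.val_castSucc, Fin.val_last, ih]
    push_cast
    ring

theorem sum_comp_tupleShift_snoc {M : Type*} [AddCommMonoid M] (f : ℚ → M) (a b : ℚ) {m : ℕ}
    (α : Fin m → ℕ) (k : ℕ) :
    ∑ j, f (tupleShift a b (Fin.snoc α k : Fin (m + 1) → ℕ) j) =
      ∑ j, f (tupleShift a b α j) + f (k * a - (m + 1 / 2) * b) := by
  simp only [Fin.sum_univ_castSucc, tupleShift, Fin.snoc_castSucc, Fin.snoc_last,
    Fin.val_castSucc, Fin.val_last]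

theorem sum_monotoneTuples_sum_comp_tupleShift_succ_succ (f : ℚ → ℚ) (a b : ℚ) (m n : ℕ) :
    ∑ α ∈ monotoneTuples (m + 1) (n + 1), ∑ j, f (tupleShift a b α j) =
      ∑ α ∈ monotoneTuples (m + 1) n, ∑ j, f (tupleShift a b α j) +
        (∑ α ∈ monotoneTuples m (n + 1), ∑ j, f (tupleShift a b α j) +
          (m + (n + 1)).choose m * f ((n + 1) * a - (m + 1 / 2) * b)) := by
  simp only [sum_monotoneTuples_succ_succ, sum_comp_tupleShift_snoc, sum_add_distrib, sum_const,
    card_monotoneTuples, nsmul_eq_mul, Nat.cast_add_one]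

theorem sum_monotoneTuples_sum_tupleShift (a b : ℚ) (m n : ℕ) :
    ∑ α ∈ monotoneTuples m n, ∑ j, tupleShift a b α j =
      (m + n).choose m * (m * (n * a - m * b) / 2) := by
  refine eq_choose_mul_of_recurrence (p := fun m n => m * (n * a - m * b) / 2)
    (T := fun m n => ∑ α ∈ monotoneTuples m n, ∑ j, tupleShift a b α j)
    (fun n => ?_) (fun m => ?_)
    (sum_monotoneTuples_sum_comp_tupleShift_succ_succ (fun c => c) a b)
    (fun m n => by push_cast; ring) m n
  · simp [monotoneTuples_zero_left]
  · simp only [monotoneTuples_zero_right, sum_singleton, sum_tupleShift_zero]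
    push_cast
    ring

theorem sum_monotoneTuples_sum_tupleShift_sq (a b : ℚ) (m n : ℕ) :
    ∑ α ∈ monotoneTuples m n, ∑ j, tupleShift a b α j ^ 2 =
      (m + n).choose m * (m * (2 * n * (2 * n + 1) * a ^ 2 - 2 * n * (4 * m - 1) * (a * b)
        + (4 * m ^ 2 - 1) * b ^ 2) / 12) := by
  refine eq_choose_mul_of_recurrence
    (p := fun m n => m * (2 * n * (2 * n + 1) * a ^ 2 - 2 * n * (4 * m - 1) * (a * b)
        + (4 * m ^ 2 - 1) * b ^ 2) / 12)
    (T := fun m n => ∑ α ∈ monotoneTuples m n, ∑ j, tupleShift a b α j ^ 2)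
    (fun n => ?_) (fun m => ?_)
    (sum_monotoneTuples_sum_comp_tupleShift_succ_succ (· ^ 2) a b)
    (fun m n => by push_cast; ring) m n
  · simp [monotoneTuples_zero_left]
  · simp only [monotoneTuples_zero_right, sum_singleton, sum_tupleShift_zero_sq]
    push_cast
    ring

theorem sum_monotoneTuples_sq_sum_tupleShift (a b : ℚ) (m n : ℕ) :
    ∑ α ∈ monotoneTuples m n, (∑ j, tupleShift a b α j) ^ 2 =
      (m + n).choose m * (m * n * (m + n + 1) / 12 * a ^ 2 + (m * (n * a - m * b) / 2) ^ 2) := by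
  refine eq_choose_mul_of_recurrence
    (p := fun m n => m * n * (m + n + 1) / 12 * a ^ 2 + (m * (n * a - m * b) / 2) ^ 2)
    (T := fun m n => ∑ α ∈ monotoneTuples m n, (∑ j, tupleShift a b α j) ^ 2)
    (g := fun m n => m * ((n + 1) * a - m * b) * ((n + 1) * a - (m + 1 / 2) * b) +
      ((n + 1) * a - (m + 1 / 2) * b) ^ 2)
    (fun n => ?_) (fun m => ?_) (fun m n => ?_) (fun m n => by push_cast; ring) m n
  · simp [monotoneTuples_zero_left]
  · simp only [monotoneTuples_zero_right, sum_singleton, sum_tupleShift_zero]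
    push_cast
    ring
  · have sq_sum_snoc (α : Fin m → ℕ) :=
      congrArg (· ^ 2) (sum_comp_tupleShift_snoc (fun c => c) a b α (n + 1))
    simp only [sum_monotoneTuples_succ_succ, sq_sum_snoc, add_sq, sum_add_distrib, ← sum_mul,
      ← mul_sum, sum_monotoneTuples_sum_tupleShift, sum_const, card_monotoneTuples, nsmul_eq_mul]
    push_cast
    ring

end MonotoneTuples

section LowOrder

open Finset
open scoped Nat

variable {A}

theorem coeff_epsExpansion_usub (c : ℚ) (u : A⟦X⟧) (k : ℕ) :
    coeff k (epsExpansion (usub A c u)) = (c ^ k / k !) • (d⁄dX A)^[k] u := by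
  ext i
  have hc : c ^ k / k ! * (k ! * (i + k).choose k) = (i + k).choose k * c ^ k := by
    field_simp
  calc coeff i (coeff k (epsExpansion (usub A c u)))
      = algebraMap ℚ A ((i + k).choose k * c ^ k) * coeff (i + k) u := by
        rw [coeff_coeff_epsExpansion]
        change algebraMap ℚ A _ * coeff _ u = _
        simp
    _ = coeff i ((c ^ k / k !) • (d⁄dX A)^[k] u) := by
        rw [coeff_smul, coeff_iterate_derivative, Nat.ascFactorial_eq_factorial_mul_choose,
          Algebra.smul_def, ← mul_assoc, ← map_natCast (algebraMap ℚ A), ← map_mul, Nat.cast_mul,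
          hc]

theorem coeff_epsExpansion_sum_usub_sub {ι : Type*} (s : Finset ι) (c : ι → ℚ) (u : A⟦X⟧) {k : ℕ}
    (hk : k ≠ 0) :
    coeff k (epsExpansion (∑ j ∈ s, (usub A (c j) u - usub A 0 u))) =
      ((∑ j ∈ s, c j ^ k) / k !) • (d⁄dX A)^[k] u := by
  simp only [map_sum, map_sub, coeff_epsExpansion_usub, zero_pow hk, zero_div, zero_smul, sub_zero,
    sum_div, sum_smul]

theorem constantCoeff_epsExpansion_sum_usub_sub {ι : Type*} (s : Finset ι) (c : ι → ℚ)
    (u : A⟦X⟧) :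
    constantCoeff (epsExpansion (∑ j ∈ s, (usub A (c j) u - usub A 0 u))) = 0 := by
  simp only [← coeff_zero_eq_constantCoeff_apply, map_sum, map_sub, coeff_epsExpansion_usub,
    pow_zero, sub_self, sum_const_zero]

theorem coeff_epsExpansion_fexpA {V : MvPowerSeries (Fin 2) A}
    (hV : constantCoeff (epsExpansion V) = 0) (k : ℕ) :
    coeff k (epsExpansion (fexpA A V)) =
      ∑ l ∈ range (k + 1), (l ! : ℚ)⁻¹ • coeff k (epsExpansion V ^ l) := by
  have coeff_pow_eq_zero (l : ℕ) (hl : k < l) : coeff k (epsExpansion V ^ l) = 0 :=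
    coeff_of_lt_order _ ((Nat.cast_lt.2 hl).trans_le (le_order_pow_of_constantCoeff_eq_zero l hV))
  ext i
  calc coeff i (coeff k (epsExpansion (fexpA A V)))
      = ∑ l ∈ range (i + k + 1), coeff i ((l ! : ℚ)⁻¹ • coeff k (epsExpansion V ^ l)) := by
        simp only [← map_pow, coeff_smul, coeff_coeff_epsExpansion]
        change ∑ l ∈ range _, _ = _
        simp
    _ = ∑ l ∈ range (k + 1), coeff i ((l ! : ℚ)⁻¹ • coeff k (epsExpansion V ^ l)) := by
        refine (sum_subset (range_subset_range.2 (by lia)) fun l _ hl => ?_).symm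
        rw [coeff_pow_eq_zero l (by simpa using hl), smul_zero, map_zero]
    _ = coeff i (∑ l ∈ range (k + 1), (l ! : ℚ)⁻¹ • coeff k (epsExpansion V ^ l)) :=
        (map_sum _ _ _).symm

theorem coeff_zero_epsExpansion_fexpA {V : MvPowerSeries (Fin 2) A}
    (hV : constantCoeff (epsExpansion V) = 0) : coeff 0 (epsExpansion (fexpA A V)) = 1 := by
  simp [coeff_epsExpansion_fexpA hV]

theorem coeff_one_epsExpansion_fexpA {V : MvPowerSeries (Fin 2) A}
    (hV : constantCoeff (epsExpansion V) = 0) :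
    coeff 1 (epsExpansion (fexpA A V)) = coeff 1 (epsExpansion V) := by
  simp [coeff_epsExpansion_fexpA hV, sum_range_succ, coeff_one]

theorem coeff_two_epsExpansion_fexpA {V : MvPowerSeries (Fin 2) A}
    (hV : constantCoeff (epsExpansion V) = 0) :
    coeff 2 (epsExpansion (fexpA A V)) =
      coeff 2 (epsExpansion V) + (1 / 2 : ℚ) • coeff 1 (epsExpansion V) ^ 2 := by
  have coeff_two_sq : coeff 2 (epsExpansion V ^ 2) = coeff 1 (epsExpansion V) ^ 2 := by
    simp [sq, coeff_mul, Nat.antidiagonal_succ, hV]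
  simp [coeff_epsExpansion_fexpA hV, sum_range_succ, coeff_one, coeff_two_sq]

theorem coeff_epsExpansion_Dser (m n : ℕ) (u : A⟦X⟧) (k : ℕ) :
    coeff k (epsExpansion (Dser A m n u)) = ∑ α ∈ monotoneTuples m n,
      coeff k (epsExpansion (fexpA A (∑ j, (usub A (tupleShift m n α j) u - usub A 0 u)))) := by
  rw [← map_sum, ← map_sum]
  exact congrArg (fun F => coeff k (epsExpansion F)) <| sum_filter_eq_sum_monotoneTuples m n
    fun α => fexpA A (∑ j, (usub A (tupleShift m n α j) u - usub A 0 u))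

theorem coeff_zero_epsExpansion_Dser (m n : ℕ) (u : A⟦X⟧) :
    coeff 0 (epsExpansion (Dser A m n u)) = ((m + n).choose m : A⟦X⟧) := by
  simp only [coeff_epsExpansion_Dser,
    coeff_zero_epsExpansion_fexpA (constantCoeff_epsExpansion_sum_usub_sub _ _ u), sum_const,
    card_monotoneTuples, nsmul_one]

theorem coeff_one_epsExpansion_Dser (m n : ℕ) (u : A⟦X⟧) :
    coeff 1 (epsExpansion (Dser A m n u)) = 0 := by
  calc coeff 1 (epsExpansion (Dser A m n u))
      = ∑ α ∈ monotoneTuples m n, (∑ j, tupleShift m n α j) • d⁄dX A u := by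
        simp only [coeff_epsExpansion_Dser,
          coeff_one_epsExpansion_fexpA (constantCoeff_epsExpansion_sum_usub_sub _ _ u),
          coeff_epsExpansion_sum_usub_sub _ _ u one_ne_zero, pow_one, Nat.factorial_one,
          Nat.cast_one, div_one, Function.iterate_one]
    _ = ((m + n).choose m * (m * (n * m - m * n) / 2) : ℚ) • d⁄dX A u := by
        rw [← sum_smul, sum_monotoneTuples_sum_tupleShift]
    _ = 0 := by
        rw [mul_comm (n : ℚ), sub_self, mul_zero, zero_div, mul_zero, zero_smul]

theorem coeff_two_epsExpansion_Dser (m n : ℕ) (u : A⟦X⟧) :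
    coeff 2 (epsExpansion (Dser A m n u)) = ((m + n).choose m : A⟦X⟧) *
      ((m * n * (2 * m * (m + n) - n) / 24 : ℚ) • d⁄dX A (d⁄dX A u) +
        (m ^ 3 * n * (m + n + 1) / 24 : ℚ) • (d⁄dX A u) ^ 2) := by
  calc coeff 2 (epsExpansion (Dser A m n u))
      = ∑ α ∈ monotoneTuples m n,
          (((∑ j, tupleShift m n α j ^ 2) / 2) • d⁄dX A (d⁄dX A u) +
            ((∑ j, tupleShift m n α j) ^ 2 / 2) • (d⁄dX A u) ^ 2) := by
        simp only [coeff_epsExpansion_Dser,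
          coeff_two_epsExpansion_fexpA (constantCoeff_epsExpansion_sum_usub_sub _ _ u),
          coeff_epsExpansion_sum_usub_sub _ _ u one_ne_zero,
          coeff_epsExpansion_sum_usub_sub _ _ u two_ne_zero, pow_one, Nat.factorial_one,
          Nat.factorial_two, Nat.cast_one, Nat.cast_ofNat, div_one, Function.iterate_succ_apply,
          Function.iterate_one, Function.iterate_zero_apply, smul_pow, smul_smul,
          one_div_mul_eq_div]
    _ = ((m + n).choose m : ℚ) •
          ((m * n * (2 * m * (m + n) - n) / 24 : ℚ) • d⁄dX A (d⁄dX A u) +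
            (m ^ 3 * n * (m + n + 1) / 24 : ℚ) • (d⁄dX A u) ^ 2) := by
        rw [sum_add_distrib, ← sum_smul, ← sum_smul, ← sum_div, ← sum_div,
          sum_monotoneTuples_sum_tupleShift_sq, sum_monotoneTuples_sq_sum_tupleShift,
          smul_add, smul_smul, smul_smul]
        congr 2 <;> ring
    _ = ((m + n).choose m : A⟦X⟧) *
          ((m * n * (2 * m * (m + n) - n) / 24 : ℚ) • d⁄dX A (d⁄dX A u) +
            (m ^ 3 * n * (m + n + 1) / 24 : ℚ) • (d⁄dX A u) ^ 2) := by
        rw [Nat.cast_smul_eq_nsmul, nsmul_eq_mul]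

end LowOrder

theorem Dser_low_order_coefficients_general (m n : ℕ) (u : PowerSeries A) :
    (∀ i : ℕ, MvPowerSeries.coeff (Finsupp.single 0 i) (Dser A m n u)
        = if i = 0 then ((Nat.choose (m + n) m : ℕ) : A) else 0) ∧
    (∀ i : ℕ, MvPowerSeries.coeff (Finsupp.single 0 i + Finsupp.single 1 1)
        (Dser A m n u) = 0) ∧
    (∀ i : ℕ, MvPowerSeries.coeff (Finsupp.single 0 i + Finsupp.single 1 2)
        (Dser A m n u)
      = ((Nat.choose (m + n) m : ℕ) : A) *
          PowerSeries.coeff i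
            ((algebraMap ℚ A ((m : ℚ) * n * (2 * m * ((m : ℚ) + n) - n) / 24)) •
                d⁄dX A (d⁄dX A u)
              + (algebraMap ℚ A ((m : ℚ) ^ 3 * n * (((m : ℚ) + n) + 1) / 24)) •
                  (d⁄dX A u) ^ 2)) := by
  refine ⟨fun i => ?_, fun i => ?_, fun i => ?_⟩
  · rw [← add_zero (Finsupp.single 0 i), ← Finsupp.single_zero (1 : Fin 2),
      ← coeff_coeff_epsExpansion, coeff_zero_epsExpansion_Dser, ← map_natCast C, coeff_C]
  · rw [← coeff_coeff_epsExpansion, coeff_one_epsExpansion_Dser, map_zero]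
  · rw [← coeff_coeff_epsExpansion, coeff_two_epsExpansion_Dser, ← nsmul_eq_mul, map_nsmul,
      nsmul_eq_mul, algebraMap_smul, algebraMap_smul]

/-- The coefficient of `ε^0` in `D` equals `C(m+n, m)`, the coefficient of `ε^1` in `D`
vanishes, and the coefficient of `ε^2` in `D` equals
`C(m+n,m)·( mn(2mh-n)/24 · u'' + m³n(h+1)/24 · (u')² )`, where `h = m+n`. -/
theorem Dser_low_order_coefficients (m n : ℕ) (hm : 0 < m) (hn : 0 < n)
    (hmn : Nat.Coprime m n) (u : PowerSeries A) :
    (∀ i : ℕ, MvPowerSeries.coeff (Finsupp.single 0 i) (Dser A m n u)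
        = if i = 0 then ((Nat.choose (m + n) m : ℕ) : A) else 0) ∧
    (∀ i : ℕ, MvPowerSeries.coeff (Finsupp.single 0 i + Finsupp.single 1 1)
        (Dser A m n u) = 0) ∧
    (∀ i : ℕ, MvPowerSeries.coeff (Finsupp.single 0 i + Finsupp.single 1 2)
        (Dser A m n u)
      = ((Nat.choose (m + n) m : ℕ) : A) *
          PowerSeries.coeff i
            ((algebraMap ℚ A ((m : ℚ) * n * (2 * m * ((m : ℚ) + n) - n) / 24)) •
                derivativeFun (derivativeFun u)
              + (algebraMap ℚ A ((m : ℚ) ^ 3 * n * (((m : ℚ) + n) + 1) / 24)) •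
                  (derivativeFun u) ^ 2)) :=
  Dser_low_order_coefficients_general A m n u
end
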